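/- arXiv:2007.01104 — 5 statements merged into one kernel-verified Lean document; each statement's English description precedes it below -/
import Mathlib

section
/- Let Γ be a finite k-regular simple graph on v vertices, let A be its adjacency matrix (a real symmetric 0/1 matrix), and let α be the smallest eigenvalue of A. Then every coclique (independent set) C of Γ satisfies |C| · (k − α) ≤ (−α) · v (equivalently, |C| ≤ v/(1 − k/α) when α < 0). -/
open Matrix in
/-- Rayleigh bound: the smallest eigenvalue bounds the quadratic form from below. -/
theorem dh_rayleigh {V : Type} [Fintype V] [DecidableEq V] (A : Matrix V V ℝ) (hA : A.IsHermitian)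
    (α : ℝ) (hmin : ∀ β : ℝ, (∃ v : V → ℝ, v ≠ 0 ∧ A.mulVec v = β • v) → α ≤ β) (x : V → ℝ) :
    α * (x ⬝ᵥ x) ≤ x ⬝ᵥ (A *ᵥ x) := by
  have hB : (A - α • (1 : Matrix V V ℝ)).IsHermitian := by
    apply hA.sub
    simp [Matrix.IsHermitian]
  have hP : (A - α • (1 : Matrix V V ℝ)).PosSemidef := by
    rw [hB.posSemidef_iff_eigenvalues_nonneg]
    intro i
    have h1 := hB.mulVec_eigenvectorBasis i
    have h2 : α ≤ hB.eigenvalues i + α := by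
      apply hmin
      refine ⟨hB.eigenvectorBasis i, ?_, ?_⟩
      · intro h0
        apply hB.eigenvectorBasis.orthonormal.ne_zero i
        ext j
        exact congrFun h0 j
      · rw [Matrix.sub_mulVec, Matrix.smul_mulVec, Matrix.one_mulVec] at h1
        rw [add_smul, ← h1]
        simp
    simpa using h2
  have h := hP.dotProduct_mulVec_nonneg x
  rw [Matrix.sub_mulVec, Matrix.smul_mulVec, Matrix.one_mulVec, dotProduct_sub,
    dotProduct_smul] at h
  simp only [star_trivial, smul_eq_mul] at h
  linarith

/-- **Delsarte-Hoffman coclique bound.** If `Γ` is a finite `k`-regular simple graph on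
`v` vertices, `α` is the smallest eigenvalue of its adjacency matrix, and `C` is a
coclique (independent set), then `|C| · (k − α) ≤ (−α) · v`. -/
theorem delsarte_hoffman_bound {V : Type} [Fintype V] [DecidableEq V]
    (Γ : SimpleGraph V) [DecidableRel Γ.Adj]
    (k : ℕ) (hreg : Γ.IsRegularOfDegree k)
    (α : ℝ)
    (hα_eig : ∃ v : V → ℝ, v ≠ 0 ∧ (Γ.adjMatrix ℝ).mulVec v = α • v)
    (hα_min : ∀ β : ℝ, (∃ v : V → ℝ, v ≠ 0 ∧ (Γ.adjMatrix ℝ).mulVec v = β • v) → α ≤ β)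
    (C : Finset V) (hC : ∀ x ∈ C, ∀ y ∈ C, ¬ Γ.Adj x y) :
    (C.card : ℝ) * ((k : ℝ) - α) ≤ (-α) * (Fintype.card V : ℝ) := by
  have hsymm : (Γ.adjMatrix ℝ).IsHermitian := by
    simp [Matrix.IsHermitian, Matrix.conjTranspose_eq_transpose_of_trivial]
  have key := dh_rayleigh (Γ.adjMatrix ℝ) hsymm α hα_min
  rcases C.eq_empty_or_nonempty with rfl | hne
  · rcases isEmpty_or_nonempty V with hV | ⟨⟨i⟩⟩
    · simp
    · have h := key (Pi.single i 1)
      simp at h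
      have : (0 : ℝ) ≤ (Fintype.card V : ℝ) := by positivity
      simp only [Finset.card_empty, Nat.cast_zero, zero_mul]
      nlinarith
  · have hc : (0 : ℝ) < C.card := by exact_mod_cast hne.card_pos
    have hn : (0 : ℝ) < Fintype.card V := by
      exact_mod_cast lt_of_lt_of_le hne.card_pos (Finset.card_le_univ C)
    set c : ℝ := (C.card : ℝ) with hcdef
    set n : ℝ := (Fintype.card V : ℝ) with hndef
    set A := Γ.adjMatrix ℝ with hAdef
    let u : V → ℝ := fun i => if i ∈ C then 1 else 0
    let e : V → ℝ := fun _ => 1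
    have huu : dotProduct u u = c := by simp [u, dotProduct, c]
    have hue : dotProduct u e = c := by simp [u, e, dotProduct, c]
    have heu : dotProduct e u = c := by rw [dotProduct_comm, hue]
    have hee : dotProduct e e = n := by simp [e, dotProduct, n]
    have hAe : A.mulVec e = (k : ℝ) • e := by
      ext i
      simp [hAdef, e, SimpleGraph.adjMatrix_mulVec_apply, hreg.degree_eq i]
    have huAu : dotProduct u (A.mulVec u) = 0 := by
      simp only [dotProduct, Matrix.mulVec]
      refine Finset.sum_eq_zero fun i _ => ?_
      by_cases hi : i ∈ C
      · refine mul_eq_zero_of_right _ (Finset.sum_eq_zero fun j _ => ?_)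
        by_cases hj : j ∈ C
        · simp [hAdef, hC i hi j hj]
        · simp [u, hj]
      · simp [u, hi]
    have heAu : dotProduct e (A.mulVec u) = k * c := by
      rw [Matrix.dotProduct_mulVec, ← Matrix.mulVec_transpose, hAdef,
        SimpleGraph.transpose_adjMatrix, ← hAdef, hAe, smul_dotProduct, heu, smul_eq_mul]
    have h := key (n • u - c • e)
    simp only [Matrix.mulVec_sub, Matrix.mulVec_smul, hAe, dotProduct_sub, sub_dotProduct,
      smul_dotProduct, dotProduct_smul, huu, hue, heu, hee, huAu, heAu, smul_eq_mul] at h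
    have h2 : 0 ≤ (n * c) * (-α * n - c * (k - α)) := by nlinarith
    have h3 := nonneg_of_mul_nonneg_right h2 (mul_pos hn hc)
    linarith
end

section
/- Let Γ be a finite k-regular simple graph on v vertices, let A be its adjacency matrix, and let α be the smallest eigenvalue of A. If a coclique C of Γ attains equality in the Delsarte-Hoffman bound, i.e. |C| · (k − α) = (−α) · v, then the 0/1 indicator vector χ_C of C lies in the sum of the eigenspaces of A for the eigenvalues k and α; equivalently, (A − k·I)(A − α·I) χ_C = 0. -/
/-- **Equality in the Delsarte-Hoffman bound.** If a coclique `C` of a finite `k`-regular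
simple graph attains equality `|C| · (k − α) = (−α) · v`, where `α` is the smallest
eigenvalue of the adjacency matrix `A`, then the indicator vector of `C` lies in the sum
of the eigenspaces of `A` for the eigenvalues `k` and `α`, i.e.
`(A − k·I)(A − α·I) χ_C = 0`. -/
theorem delsarte_hoffman_equality {V : Type} [Fintype V] [DecidableEq V]
    (Γ : SimpleGraph V) [DecidableRel Γ.Adj]
    (k : ℕ) (hreg : Γ.IsRegularOfDegree k)
    (α : ℝ)
    (hα_eig : ∃ v : V → ℝ, v ≠ 0 ∧ (Γ.adjMatrix ℝ).mulVec v = α • v)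
    (hα_min : ∀ β : ℝ, (∃ v : V → ℝ, v ≠ 0 ∧ (Γ.adjMatrix ℝ).mulVec v = β • v) → α ≤ β)
    (C : Finset V) (hC : ∀ x ∈ C, ∀ y ∈ C, ¬ Γ.Adj x y)
    (heq : (C.card : ℝ) * ((k : ℝ) - α) = (-α) * (Fintype.card V : ℝ)) :
    ((Γ.adjMatrix ℝ - (k : ℝ) • (1 : Matrix V V ℝ)) *
        (Γ.adjMatrix ℝ - α • (1 : Matrix V V ℝ))).mulVec
      (fun x => if x ∈ C then (1 : ℝ) else 0) = 0 := by
  classical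
  set A := Γ.adjMatrix ℝ with hA
  set χ : V → ℝ := fun x => if x ∈ C then (1 : ℝ) else 0 with hχ
  set B := A - α • (1 : Matrix V V ℝ) with hBdef
  have hn : (Fintype.card V : ℝ) ≠ 0 := by
    obtain ⟨v, hv, -⟩ := hα_eig
    obtain ⟨x, -⟩ := Function.ne_iff.mp hv
    have : Nonempty V := ⟨x⟩
    exact_mod_cast Fintype.card_ne_zero
  have hBmul : ∀ w : V → ℝ, B.mulVec w = A.mulVec w - α • w := by
    intro w
    rw [hBdef, Matrix.sub_mulVec, Matrix.smul_mulVec, Matrix.one_mulVec]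
  have hAT : A.transpose = A := Γ.transpose_adjMatrix
  have hB : B.IsHermitian := by
    rw [Matrix.IsHermitian, Matrix.conjTranspose_eq_transpose_of_trivial, hBdef,
      Matrix.transpose_sub, Matrix.transpose_smul, Matrix.transpose_one, hAT]
  have hpsd : B.PosSemidef := by
    rw [hB.posSemidef_iff_eigenvalues_nonneg]
    intro i
    have h1 := hB.mulVec_eigenvectorBasis i
    rw [hBmul] at h1
    have h2 : α ≤ hB.eigenvalues i + α := by
      apply hα_min
      refine ⟨(hB.eigenvectorBasis i).ofLp, ?_, ?_⟩
      · intro h0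
        exact hB.eigenvectorBasis.orthonormal.ne_zero i (by ext x; exact congrFun h0 x)
      · rw [add_smul, ← h1, sub_add_cancel]
    simpa using h2
  have hA1 : A.mulVec (fun _ => (1 : ℝ)) = fun _ => (k : ℝ) := by
    funext x
    rw [hA, SimpleGraph.adjMatrix_mulVec_apply]
    simp [hreg.degree_eq x]
  have hB1 : B.mulVec (fun _ => (1 : ℝ)) = fun _ => (k : ℝ) - α := by
    rw [hBmul, hA1]; funext x; simp
  have hχs : ∑ x, χ x = C.card := by simp [hχ]
  have hχA : χ ⬝ᵥ A.mulVec χ = 0 := by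
    apply Finset.sum_eq_zero
    intro x _
    by_cases hx : x ∈ C
    · rw [hA, SimpleGraph.adjMatrix_mulVec_apply]
      rw [Finset.sum_eq_zero, mul_zero]
      intro y hy
      have hy' : Γ.Adj x y := by simpa using hy
      have : y ∉ C := fun h => hC x hx y h hy'
      simp [hχ, this]
    · simp [hχ, hx]
  have hχχ : χ ⬝ᵥ χ = C.card := by simp [hχ, dotProduct]
  have hχB : χ ⬝ᵥ B.mulVec χ = -α * C.card := by
    rw [hBmul, dotProduct_sub, hχA, dotProduct_smul, hχχ]; simp
  have hχB1 : χ ⬝ᵥ B.mulVec (fun _ => (1 : ℝ)) = C.card * ((k : ℝ) - α) := by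
    rw [hB1, dotProduct, ← Finset.sum_mul, hχs]
  have h1Bχ : (fun _ => (1 : ℝ)) ⬝ᵥ B.mulVec χ = C.card * ((k : ℝ) - α) := by
    rw [← hχB1, Matrix.dotProduct_mulVec, dotProduct_comm, ← Matrix.mulVec_transpose]
    congr 2
  have h1B1 : (fun _ : V => (1 : ℝ)) ⬝ᵥ B.mulVec (fun _ => (1 : ℝ))
      = Fintype.card V * ((k : ℝ) - α) := by
    rw [hB1]; simp [dotProduct]; ring
  set t : ℝ := C.card / Fintype.card V with ht
  have htn : t * Fintype.card V = C.card := div_mul_cancel₀ _ hn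
  have hy0 : B.mulVec (χ - t • (fun _ => (1 : ℝ))) = 0 := by
    rw [← hpsd.dotProduct_mulVec_zero_iff]
    rw [star_trivial, Matrix.mulVec_sub, Matrix.mulVec_smul, sub_dotProduct, dotProduct_sub,
      dotProduct_sub, smul_dotProduct, smul_dotProduct, dotProduct_smul, dotProduct_smul,
      hχB, hχB1, h1Bχ, h1B1]
    simp only [smul_eq_mul]
    linear_combination (t * ((k : ℝ) - α) + α) * htn - t * heq
  have hBχ : B.mulVec χ = (t * ((k : ℝ) - α)) • (fun _ => (1 : ℝ)) := by
    rw [Matrix.mulVec_sub, Matrix.mulVec_smul, hB1, sub_eq_zero] at hy0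
    rw [hy0]; funext x; simp
  rw [← Matrix.mulVec_mulVec, hBχ, Matrix.mulVec_smul, Matrix.sub_mulVec, hA1,
    Matrix.smul_mulVec, Matrix.one_mulVec]
  funext x
  simp
end

section
/- Let n ≥ 1 and q a prime power. If C is an EKR-set of complete flags in V = F_q^{n+1}, then |C| · (1 + (√q)^{n+1}) ≤ N, where N is the total number of complete flags in V (so |C| ≤ N/(1 + q^{(n+1)/2})). -/
/-- A complete flag in `V = F^{n+1}`: a chain of subspaces `U_1 ⊂ … ⊂ U_n` with
`dim U_i = i` (here `U i` has dimension `i+1` for `i : Fin n`). -/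
structure CompleteFlag (F : Type) [Field F] (n : ℕ) where
  U : Fin n → Submodule F (Fin (n + 1) → F)
  dim : ∀ i : Fin n, Module.finrank F (U i) = i + 1
  mono : Monotone U

/-- Two complete flags `(U_i)` and `(W_i)` are opposite if `U_i ∩ W_{n+1−i} = 0` for all
`i`; with our indexing, the subspace of dimension `n+1-(i+1)` is `W i.rev`. -/
def CompleteFlag.Opposite {F : Type} [Field F] {n : ℕ}
    (F1 F2 : CompleteFlag F n) : Prop :=
  ∀ i : Fin n, F1.U i ⊓ F2.U i.rev = ⊥

namespace CompleteFlag

open Module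

variable {F : Type} [Field F] {n : ℕ}

/-- The subspace of dimension `k` in the flag, extended by `⊥` and `⊤`. -/
noncomputable def S (G : CompleteFlag F n) (k : ℕ) : Submodule F (Fin (n + 1) → F) :=
  if k = 0 then ⊥ else if h : k - 1 < n then G.U ⟨k - 1, h⟩ else ⊤

lemma S_zero (G : CompleteFlag F n) : G.S 0 = ⊥ := by simp [S]

lemma S_succ (G : CompleteFlag F n) (i : Fin n) : G.S (i + 1) = G.U i := by
  simp [S]

lemma S_top (G : CompleteFlag F n) {k : ℕ} (h : n + 1 ≤ k) : G.S k = ⊤ := by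
  rw [S, if_neg (by omega), dif_neg (by omega)]

lemma S_succ' (G : CompleteFlag F n) {i : ℕ} (h : i < n) : G.S (i + 1) = G.U ⟨i, h⟩ := by
  simp [S, h]

lemma S_mono (G : CompleteFlag F n) : Monotone G.S := by
  intro a b hab
  rcases a with _ | a
  · simp [S_zero]
  · by_cases hb : b ≤ n
    · obtain ⟨b, rfl⟩ : ∃ c, b = c + 1 := ⟨b - 1, by omega⟩
      rw [S_succ' G (by omega : a < n), S_succ' G (by omega : b < n)]
      exact G.mono (by simp only [Fin.mk_le_mk]; omega)
    · rw [S_top G (by omega : n + 1 ≤ b)]; exact le_top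

lemma S_finrank (G : CompleteFlag F n) {k : ℕ} (h : k ≤ n + 1) : finrank F (G.S k) = k := by
  rcases k with _ | k
  · simp [S_zero]
  · by_cases hk : k < n
    · rw [S_succ' G hk, G.dim]
    · rw [S_top G (by omega), finrank_top, finrank_fin_fun]; omega

lemma ext_S {G H : CompleteFlag F n} (h : ∀ k, k < n → G.S (k + 1) = H.S (k + 1)) : G = H := by
  have : G.U = H.U := by
    funext i
    rw [← S_succ, ← S_succ, h i i.2]
  cases G; cases H; simp_all

/-- Two flags in the same panel of type `i`: they agree except in dimension `i+1`. -/
def Adj (i : ℕ) (G H : CompleteFlag F n) : Prop := ∀ k, k ≠ i + 1 → G.S k = H.S k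

lemma Adj.refl (i : ℕ) (G : CompleteFlag F n) : Adj i G G := fun _ _ => rfl
lemma Adj.symm {i : ℕ} {G H : CompleteFlag F n} (h : Adj i G H) : Adj i H G :=
  fun k hk => (h k hk).symm
lemma Adj.trans {i : ℕ} {G H K : CompleteFlag F n} (h : Adj i G H) (h' : Adj i H K) :
    Adj i G K := fun k hk => (h k hk).trans (h' k hk)

lemma Adj.eq {i : ℕ} {G H : CompleteFlag F n} (h : Adj i G H)
    (h' : G.S (i + 1) = H.S (i + 1)) : G = H := by
  apply ext_S
  intro k _
  by_cases hk : k = i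
  · rw [hk, h']
  · exact h _ (by omega)

/-- Replace the `i+1`-dimensional member of the flag. -/
lemma exists_modify (G : CompleteFlag F n) {i : ℕ} (hi : i < n)
    (Y : Submodule F (Fin (n + 1) → F)) (h1 : G.S i ≤ Y) (h2 : Y ≤ G.S (i + 2))
    (h3 : finrank F Y = i + 1) : ∃ H : CompleteFlag F n, Adj i G H ∧ H.S (i + 1) = Y := by
  classical
  refine ⟨⟨fun j => if (j : ℕ) = i then Y else G.U j, ?_, ?_⟩, ?_, ?_⟩
  · intro j
    by_cases hj : (j : ℕ) = i
    · rw [if_pos hj, h3, hj]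
    · rw [if_neg hj, G.dim]
  · intro a b hab
    have hab' : (a : ℕ) ≤ b := hab
    by_cases ha : (a : ℕ) = i
    · by_cases hb : (b : ℕ) = i
      · simp [ha, hb]
      · simp only [ha, hb, if_true, if_false]
        rw [← S_succ]
        exact h2.trans (G.S_mono (by omega))
    · by_cases hb : (b : ℕ) = i
      · simp only [ha, hb, if_true, if_false]
        rw [← S_succ]
        exact le_trans (G.S_mono (by omega)) h1
      · simp only [ha, hb, if_false]
        exact G.mono hab
  · intro k hk
    rcases k with _ | k
    · simp [S_zero]
    · by_cases hkn : k < n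
      · rw [S_succ' _ hkn, S_succ' _ hkn]
        have : k ≠ i := by omega
        simp [this]
      · rw [S_top _ (by omega), S_top _ (by omega)]
  · rw [S_succ' _ hi]; simp

lemma opposite_iff (G H : CompleteFlag F n) :
    G.Opposite H ↔ ∀ k, k ≤ n + 1 → G.S k ⊓ H.S (n + 1 - k) = ⊥ := by
  constructor
  · intro h k hk
    rcases k with _ | k
    · simp [S_zero]
    · by_cases hkn : k < n
      · have := h ⟨k, hkn⟩
        rw [← S_succ, ← S_succ] at this
        rw [← this]
        congr 2
        simp [Fin.rev]; omega
      · have : n + 1 - (k + 1) = 0 := by omega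
        rw [this, S_zero]; simp
  · intro h i
    rw [← S_succ, ← S_succ, ← h (i + 1) (by omega)]
    congr 2
    simp [Fin.rev]; omega

instance instFiniteFlag [Finite F] : Finite (CompleteFlag F n) := by
  have : Finite (Submodule F (Fin (n + 1) → F)) :=
    Finite.of_injective (fun s => (s : Set (Fin (n + 1) → F))) SetLike.coe_injective
  refine Finite.of_injective (fun G => G.U) ?_
  intro G H h
  cases G; cases H; simp_all

end CompleteFlag

namespace CompleteFlag

open Module

variable {F : Type} [Field F] {n : ℕ}

lemma finrank_inf_le_succ {V : Type*} [AddCommGroup V] [Module F V] [FiniteDimensional F V]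
    (W Y B : Submodule F V) (h : Y ≤ B) {d e : ℕ} (hB : finrank F B ≤ finrank F Y + d)
    (he : e = finrank F (W ⊓ Y : Submodule F V)) :
    finrank F (W ⊓ B : Submodule F V) ≤ e + d := by
  have h1 := Submodule.finrank_sup_add_finrank_inf_eq (W ⊓ B) Y
  have h2 : W ⊓ B ⊓ Y = W ⊓ Y := by rw [inf_assoc, inf_eq_right.2 h]
  have h3 : finrank F (W ⊓ B ⊔ Y : Submodule F V) ≤ finrank F B :=
    Submodule.finrank_mono (sup_le inf_le_right h)
  rw [h2] at h1
  omega

/-- A panel has `q+1` elements. -/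
lemma card_panel [Fintype F] (G : CompleteFlag F n) {i : ℕ} (hi : i < n) :
    Nat.card {H : CompleteFlag F n // Adj i G H} = Fintype.card F + 1 := by
  obtain ⟨D0, hD0⟩ := Submodule.exists_isCompl (G.S i)
  set A := G.S i with hA
  set B := G.S (i + 2) with hB
  have hAB : A ≤ B := G.S_mono (by omega)
  set D := D0 ⊓ B with hD
  have hAD : A ⊓ D = ⊥ := by
    rw [hD, ← inf_assoc, hD0.inf_eq_bot, bot_inf_eq]
  have hADB : A ⊔ D = B := by
    rw [hD, ← sup_inf_assoc_of_le _ hAB, hD0.sup_eq_top, top_inf_eq]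
  have hfA : finrank F A = i := G.S_finrank (by omega)
  have hfB : finrank F B = i + 2 := G.S_finrank (by omega)
  have hfD : finrank F D = 2 := by
    have := Submodule.finrank_sup_add_finrank_inf_eq A D
    rw [hADB, hAD, finrank_bot] at this
    omega
  rw [← Nat.card_eq_fintype_card, ← Projectivization.card_of_finrank_two F D hfD,
    Nat.card_congr (Projectivization.equivSubmodule F D)]
  have key : ∀ Y : Submodule F (Fin (n + 1) → F), A ≤ Y → Y ≤ B → A ⊔ (D ⊓ Y) = Y := by
    intro Y h1 h2
    rw [← sup_inf_assoc_of_le _ h1, hADB, inf_eq_right.2 h2]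
  have hle : ∀ H : CompleteFlag F n, Adj i G H → A ≤ H.S (i + 1) ∧ H.S (i + 1) ≤ B := by
    intro H h
    refine ⟨?_, ?_⟩
    · rw [hA, h i (by omega)]; exact H.S_mono (by omega)
    · rw [hB, h (i + 2) (by omega)]; exact H.S_mono (by omega)
  have hcm : ∀ Y : Submodule F (Fin (n + 1) → F),
      (Y.comap D.subtype).map D.subtype = D ⊓ Y := by
    intro Y
    rw [Submodule.map_comap_eq, Submodule.range_subtype]
  refine Nat.card_congr (Equiv.ofBijective
    (fun H => ⟨(H.1.S (i + 1)).comap D.subtype, ?_⟩) ⟨?_, ?_⟩)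
  · obtain ⟨h1, h2⟩ := hle H.1 H.2
    have h3 := Submodule.finrank_sup_add_finrank_inf_eq A (D ⊓ H.1.S (i + 1))
    rw [key _ h1 h2, ← inf_assoc, hAD, bot_inf_eq, finrank_bot, H.1.S_finrank (by omega)] at h3
    rw [(Submodule.equivMapOfInjective D.subtype D.subtype_injective _).finrank_eq, hcm]
    omega
  · intro H K h
    have h' : (H.1.S (i + 1)).comap D.subtype = (K.1.S (i + 1)).comap D.subtype :=
      congrArg Subtype.val h
    apply Subtype.ext
    apply (H.2.symm.trans K.2).eq
    rw [← key _ (hle H.1 H.2).1 (hle H.1 H.2).2, ← key _ (hle K.1 K.2).1 (hle K.1 K.2).2,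
      ← hcm, ← hcm, h']
  · rintro ⟨L, hL⟩
    have hLD : L.map D.subtype ≤ D := Submodule.map_subtype_le D L
    have hfL : finrank F (L.map D.subtype) = 1 := by
      rw [← (Submodule.equivMapOfInjective D.subtype D.subtype_injective _).finrank_eq, hL]
    have h3 := Submodule.finrank_sup_add_finrank_inf_eq A (L.map D.subtype)
    have h4 : A ⊓ L.map D.subtype = ⊥ := by
      rw [eq_bot_iff, ← hAD]; exact inf_le_inf_left _ hLD
    rw [h4, finrank_bot] at h3
    obtain ⟨H, hH, hHY⟩ := exists_modify G hi (A ⊔ L.map D.subtype) le_sup_left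
      (by rw [← hB, ← hADB]; exact sup_le_sup_left hLD _) (by omega)
    refine ⟨⟨H, hH⟩, ?_⟩
    apply Subtype.ext
    apply Submodule.map_injective_of_injective D.subtype_injective
    change ((H.S (i + 1)).comap D.subtype).map D.subtype = _
    rw [hcm, hHY, sup_comm, inf_comm, sup_inf_assoc_of_le _ hLD, hAD, sup_bot_eq]

/-- Relative position with prescribed dimensions of intersection. -/
def Pos (r : ℕ → ℕ → ℕ) (G H : CompleteFlag F n) : Prop :=
  ∀ x y, x ≤ n + 1 → y ≤ n + 1 →
    finrank F (G.S y ⊓ H.S x : Submodule F (Fin (n + 1) → F)) = r x y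

section step
lemma step_core
    {i a b : ℕ} (hi : i < n) (hab : a < b) (hb : b ≤ n) {r r' : ℕ → ℕ → ℕ}
    (hoff : ∀ x y, x ≠ i + 1 → r' x y = r x y)
    (hr1 : ∀ y, r (i + 1) y = r i y + if a < y then 1 else 0)
    (hr1' : ∀ y, r' (i + 1) y = r i y + if b < y then 1 else 0)
    (hr2 : ∀ y, r (i + 2) y = r i y + (if a < y then 1 else 0) + if b < y then 1 else 0)
    (G H : CompleteFlag F n)
    (hE : ∀ x y, x ≤ n + 1 → y ≤ n + 1 → x ≠ i + 1 →
      finrank F (G.S y ⊓ H.S x : Submodule F (Fin (n + 1) → F)) = r x y) :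
    (Pos r G H ↔ G.S (a + 1) ⊓ H.S (i + 2) ≤ H.S (i + 1)) ∧
    (Pos r' G H ↔ ¬ G.S (a + 1) ⊓ H.S (i + 2) ≤ H.S (i + 1)) ∧
    (G.S (a + 1) ⊓ H.S (i + 2) ≤ H.S (i + 1) →
      H.S i ⊔ (G.S (a + 1) ⊓ H.S (i + 2)) = H.S (i + 1)) ∧
    finrank F (H.S i ⊔ (G.S (a + 1) ⊓ H.S (i + 2)) : Submodule F (Fin (n + 1) → F)) = i + 1 := by
  have m1 : H.S i ≤ H.S (i + 1) := H.S_mono (by omega)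
  have m2 : H.S (i + 1) ≤ H.S (i + 2) := H.S_mono (by omega)
  have f0 := H.S_finrank (k := i) (by omega)
  have f1 := H.S_finrank (k := i + 1) (by omega)
  have f2 := H.S_finrank (k := i + 2) (by omega)
  have e0 : ∀ y, y ≤ n + 1 → finrank F (G.S y ⊓ H.S i : Submodule F _) = r i y :=
    fun y hy => hE i y (by omega) hy (by omega)
  have e2 : ∀ y, y ≤ n + 1 → finrank F (G.S y ⊓ H.S (i + 2) : Submodule F _) = r (i + 2) y :=
    fun y hy => hE (i + 2) y (by omega) hy (by omega)
  have u1 : ∀ y, finrank F (G.S y ⊓ H.S (i + 1) : Submodule F _) ≤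
      finrank F (G.S y ⊓ H.S i : Submodule F _) + 1 :=
    fun y => finrank_inf_le_succ _ _ _ m1 (by omega) rfl
  have u2 : ∀ y, finrank F (G.S y ⊓ H.S (i + 2) : Submodule F _) ≤
      finrank F (G.S y ⊓ H.S (i + 1) : Submodule F _) + 1 :=
    fun y => finrank_inf_le_succ _ _ _ m2 (by omega) rfl
  have l1 : ∀ y, finrank F (G.S y ⊓ H.S i : Submodule F _) ≤
      finrank F (G.S y ⊓ H.S (i + 1) : Submodule F _) :=
    fun y => Submodule.finrank_mono (inf_le_inf_left _ m1)
  have l2 : ∀ y, finrank F (G.S y ⊓ H.S (i + 1) : Submodule F _) ≤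
      finrank F (G.S y ⊓ H.S (i + 2) : Submodule F _) :=
    fun y => Submodule.finrank_mono (inf_le_inf_left _ m2)
  set X := G.S (a + 1) ⊓ H.S (i + 2) with hX
  have fX : finrank F X = r i (a + 1) + 1 := by
    rw [hX, e2 _ (by omega), hr2]
    simp [show ¬ b < a + 1 by omega]
  have fXi : finrank F (H.S i ⊓ X : Submodule F _) = r i (a + 1) := by
    rw [← e0 (a + 1) (by omega), hX, inf_comm, inf_assoc, inf_eq_right.2 (m1.trans m2)]
  have fstar : finrank F (H.S i ⊔ X : Submodule F _) = i + 1 := by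
    have := Submodule.finrank_sup_add_finrank_inf_eq (H.S i) X
    omega
  have XnotY : ¬ X ≤ H.S i := by
    intro h
    rw [inf_eq_right.2 h] at fXi
    omega
  -- middle rows
  have mid1 : X ≤ H.S (i + 1) → ∀ y, a < y → y ≤ n + 1 →
      r i y + 1 ≤ finrank F (G.S y ⊓ H.S (i + 1) : Submodule F _) := by
    intro hXY y hy hyn
    rw [← e0 y hyn, Nat.succ_le_iff]
    apply Submodule.finrank_lt_finrank_of_lt
    refine lt_of_le_of_ne (inf_le_inf_left _ m1) ?_
    intro h
    apply XnotY
    have : X ≤ G.S y ⊓ H.S (i + 1) := le_inf (inf_le_left.trans (G.S_mono (by omega))) hXY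
    rw [← h] at this
    exact this.trans inf_le_right
  have mid2 : ¬ X ≤ H.S (i + 1) → ∀ y, a < y →  y ≤ n + 1 → y ≤ b →
      finrank F (G.S y ⊓ H.S (i + 1) : Submodule F _) ≤ r i y := by
    intro hXY y hy hyn hyb
    have h3 : finrank F (G.S y ⊓ H.S (i + 1) : Submodule F _) <
        finrank F (G.S y ⊓ H.S (i + 2) : Submodule F _) := by
      apply Submodule.finrank_lt_finrank_of_lt
      refine lt_of_le_of_ne (inf_le_inf_left _ m2) ?_
      intro h
      apply hXY
      have : X ≤ G.S y ⊓ H.S (i + 2) := inf_le_inf_right _ (G.S_mono (by omega))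
      rw [← h] at this
      exact this.trans inf_le_right
    rw [e2 y hyn, hr2, if_pos hy, if_neg (by omega)] at h3
    omega
  have pr : X ≤ H.S (i + 1) → Pos r G H := by
    intro hXY x y hx hy
    by_cases hxi : x = i + 1
    · subst hxi
      have := mid1 hXY y
      have := u1 y
      have := l1 y
      have := l2 y
      have := e0 y hy
      have := e2 y hy
      have := hr1 y
      have := hr2 y
      split_ifs at * <;> omega
    · exact hE x y hx hy hxi
  have pr' : ¬ X ≤ H.S (i + 1) → Pos r' G H := by
    intro hXY x y hx hy
    by_cases hxi : x = i + 1
    · subst hxi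
      have := mid2 hXY y
      have := u1 y
      have := u2 y
      have := l1 y
      have := l2 y
      have := e0 y hy
      have := e2 y hy
      have := hr1' y
      have := hr2 y
      split_ifs at * <;> omega
    · rw [hoff x y hxi]; exact hE x y hx hy hxi
  have ne : ¬ (Pos r G H ∧ Pos r' G H) := by
    rintro ⟨h1, h2⟩
    have h3 := h1 (i + 1) (a + 1) (by omega) (by omega)
    rw [h2 (i + 1) (a + 1) (by omega) (by omega), hr1, hr1', if_neg (by omega),
      if_pos (by omega)] at h3
    omega
  refine ⟨⟨fun h => ?_, pr⟩, ⟨fun h h' => ne ⟨pr h', h⟩, pr'⟩, ?_, fstar⟩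
  · by_contra h'
    exact ne ⟨h, pr' h'⟩
  · intro h
    exact Submodule.eq_of_le_of_finrank_eq (sup_le m1 h) (by rw [fstar, f1])

lemma step_unique
    {i a b : ℕ} (hi : i < n) (hab : a < b) (hb : b ≤ n) {r r' : ℕ → ℕ → ℕ}
    (hoff : ∀ x y, x ≠ i + 1 → r' x y = r x y)
    (hr1 : ∀ y, r (i + 1) y = r i y + if a < y then 1 else 0)
    (hr1' : ∀ y, r' (i + 1) y = r i y + if b < y then 1 else 0)
    (hr2 : ∀ y, r (i + 2) y = r i y + (if a < y then 1 else 0) + if b < y then 1 else 0)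
    {G H K : CompleteFlag F n} (h : Pos r G H) (h' : Pos r G K)
    (hadj : Adj i H K) : H = K := by
  have c1 := step_core hi hab hb hoff hr1 hr1' hr2 G H (fun x y hx hy _ => h x y hx hy)
  have c2 := step_core hi hab hb hoff hr1 hr1' hr2 G K (fun x y hx hy _ => h' x y hx hy)
  apply hadj.eq
  rw [← c1.2.2.1 (c1.1.1 h), ← c2.2.2.1 (c2.1.1 h'), hadj i (by omega), hadj (i + 2) (by omega)]

lemma step_iff
    {i a b : ℕ} (hi : i < n) (hab : a < b) (hb : b ≤ n) {r r' : ℕ → ℕ → ℕ}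
    (hoff : ∀ x y, x ≠ i + 1 → r' x y = r x y)
    (hr1 : ∀ y, r (i + 1) y = r i y + if a < y then 1 else 0)
    (hr1' : ∀ y, r' (i + 1) y = r i y + if b < y then 1 else 0)
    (hr2 : ∀ y, r (i + 2) y = r i y + (if a < y then 1 else 0) + if b < y then 1 else 0)
    (G H : CompleteFlag F n) :
    Pos r' G H ↔ ∃ K, Pos r G K ∧ Adj i K H ∧ K ≠ H := by
  constructor
  · intro h
    have hE : ∀ x y, x ≤ n + 1 → y ≤ n + 1 → x ≠ i + 1 →
      finrank F (G.S y ⊓ H.S x : Submodule F (Fin (n + 1) → F)) = r x y :=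
      fun x y hx hy hxi => by rw [← hoff x y hxi]; exact h x y hx hy
    have c := step_core hi hab hb hoff hr1 hr1' hr2 G H hE
    obtain ⟨K, hK, hKY⟩ := exists_modify H hi (H.S i ⊔ (G.S (a + 1) ⊓ H.S (i + 2))) le_sup_left
      (sup_le (H.S_mono (by omega)) inf_le_right) c.2.2.2
    have c' := step_core hi hab hb hoff hr1 hr1' hr2 G K
      (fun x y hx hy hxi => by rw [← hK x hxi]; exact hE x y hx hy hxi)
    have hle : G.S (a + 1) ⊓ K.S (i + 2) ≤ K.S (i + 1) := by
      rw [hKY, ← hK (i + 2) (by omega)]; exact le_sup_right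
    refine ⟨K, c'.1.2 hle, hK.symm, ?_⟩
    rintro rfl
    exact c.2.1.1 h hle
  · rintro ⟨K, hK, hadj, hne⟩
    have c := step_core hi hab hb hoff hr1 hr1' hr2 G H
      (fun x y hx hy hxi => by rw [← hadj x hxi]; exact hK x y hx hy)
    rw [c.2.1, ← c.1]
    intro h
    exact hne (step_unique hi hab hb hoff hr1 hr1' hr2 hK h hadj)

end step

end CompleteFlag

namespace CompleteFlag

open Module

variable {F : Type} [Field F] {n : ℕ}

/-- Total incidence of two flags. -/
noncomputable def inc (G H : CompleteFlag F n) : ℕ :=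
  ∑ x ∈ Finset.range (n + 1), ∑ y ∈ Finset.range (n + 1),
    finrank F (G.S x ⊓ H.S y : Submodule F (Fin (n + 1) → F))

lemma inc_le (G H : CompleteFlag F n) : inc G H ≤ (n + 1) * ((n + 1) * (n + 1)) := by
  unfold inc
  calc _ ≤ ∑ x ∈ Finset.range (n + 1), ∑ y ∈ Finset.range (n + 1), (n + 1) := by
        refine Finset.sum_le_sum fun x _ => Finset.sum_le_sum fun y _ => ?_
        calc _ ≤ finrank F (Fin (n + 1) → F) := Submodule.finrank_le _
          _ = n + 1 := by simp
    _ = _ := by simp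

lemma exists_closer (G H : CompleteFlag F n) (hne : G ≠ H) :
    ∃ i < n, ∃ K, Adj i G K ∧ inc G H < inc K H := by
  classical
  -- the largest index where they differ
  obtain ⟨k, hk, hkn, hkmax⟩ : ∃ k, G.S k ≠ H.S k ∧ k ≤ n ∧ ∀ j, k < j → G.S j = H.S j := by
    by_contra hcon
    push Not at hcon
    have : ∀ m, m ≤ n + 1 → ∀ j, n + 1 - m ≤ j → G.S j = H.S j := by
      intro m
      induction m with
      | zero => intro _ j hj; rw [S_top _ (by omega), S_top _ (by omega)]
      | succ m ih =>
        intro hm j hj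
        by_contra hj'
        obtain ⟨l, hl, hl'⟩ := hcon j hj' (by
          by_contra h
          exact hj' (ih (by omega) j (by omega)))
        exact hl' (ih (by omega) l (by omega))
    exact hne (ext_S fun j _ => this (n + 1) le_rfl (j + 1) (by omega))
  -- the first index m+1 with G.S (m+1) not in H.S k
  have hex : ∃ m, ¬ G.S m ≤ H.S k := ⟨k, fun h => hk (Submodule.eq_of_le_of_finrank_eq h (by
    rw [S_finrank _ (by omega), S_finrank _ (by omega)]))⟩
  have hm := Nat.find_spec hex
  have hmin := fun l => Nat.find_min (m := l) hex
  have hmk : Nat.find hex ≤ k := Nat.find_le (fun h => hk (Submodule.eq_of_le_of_finrank_eq h (by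
    rw [S_finrank _ (by omega), S_finrank _ (by omega)])))
  generalize Nat.find hex = m0 at hm hmin hmk
  obtain ⟨m, rfl⟩ : ∃ m, m0 = m + 1 := by
    refine ⟨m0 - 1, ?_⟩
    rcases m0 with _ | m0
    · simp [S_zero] at hm
    · rfl
  have hGm : G.S m ≤ H.S k := by
    have := hmin m (by omega)
    simpa using this
  have hk1 : G.S (k + 1) = H.S (k + 1) := hkmax _ (by omega)
  have hm2 : G.S (m + 2) ≤ H.S (k + 1) := by
    rw [← hk1]; exact G.S_mono (by omega)
  set Y := G.S (m + 2) ⊓ H.S k with hY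
  have hfY : finrank F Y = m + 1 := by
    have hlt : finrank F Y < finrank F (G.S (m + 2)) := by
      apply Submodule.finrank_lt_finrank_of_lt
      refine lt_of_le_of_ne inf_le_left ?_
      intro h
      apply hm
      refine (G.S_mono (by omega : m + 1 ≤ m + 2)).trans ?_
      rw [← h]; exact inf_le_right
    have h2 := finrank_inf_le_succ (G.S (m + 2)) (H.S k) (H.S (k + 1)) (H.S_mono (by omega))
      (d := 1) (by rw [S_finrank _ (by omega), S_finrank _ (by omega)]) rfl
    rw [inf_eq_left.2 hm2, ← hY] at h2
    rw [S_finrank _ (by omega)] at h2 hlt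
    omega
  obtain ⟨K, hK, hKY⟩ := exists_modify G (i := m) (by omega) Y
    (le_inf (G.S_mono (by omega)) hGm) inf_le_left hfY
  refine ⟨m, by omega, K, hK, ?_⟩
  have hle : ∀ x y, finrank F (G.S x ⊓ H.S y : Submodule F (Fin (n + 1) → F)) ≤
      finrank F (K.S x ⊓ H.S y : Submodule F (Fin (n + 1) → F)) := by
    intro x y
    by_cases hx : x = m + 1
    · subst hx
      rw [hKY]
      by_cases hy : y ≤ k
      · apply Submodule.finrank_mono
        rw [hY, inf_assoc, inf_eq_right.2 (H.S_mono hy)]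
        exact inf_le_inf_right _ (G.S_mono (by omega))
      · have h1 : G.S (m + 1) ≤ H.S y := by
          rw [← hkmax y (by omega)]; exact G.S_mono (by omega)
        have h2 : Y ≤ H.S y := inf_le_right.trans (H.S_mono (by omega))
        rw [inf_eq_left.2 h1, inf_eq_left.2 h2, hfY, S_finrank _ (by omega)]
    · rw [hK x hx]
  unfold inc
  refine Finset.sum_lt_sum (fun x _ => Finset.sum_le_sum fun y _ => hle x y)
    ⟨m + 1, Finset.mem_range.2 (by omega), Finset.sum_lt_sum (fun y _ => hle _ y)
      ⟨k, Finset.mem_range.2 (by omega), ?_⟩⟩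
  rw [hKY, inf_eq_left.2 (inf_le_right : Y ≤ H.S k), hfY]
  have : finrank F (G.S (m + 1) ⊓ H.S k : Submodule F (Fin (n + 1) → F)) <
      finrank F (G.S (m + 1)) := by
    apply Submodule.finrank_lt_finrank_of_lt
    refine lt_of_le_of_ne inf_le_left ?_
    intro h
    exact hm (by rw [← h]; exact inf_le_right)
  rwa [S_finrank _ (by omega)] at this

lemma connected {α : Type*} (f : CompleteFlag F n → α)
    (hf : ∀ i < n, ∀ G H, Adj i G H → f G = f H) (G H : CompleteFlag F n) : f G = f H := by
  obtain ⟨N, hN⟩ : ∃ N, N = (n + 1) * ((n + 1) * (n + 1)) - inc G H := ⟨_, rfl⟩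
  induction N using Nat.strong_induction_on generalizing G with
  | _ N ih =>
    by_cases hne : G = H
    · rw [hne]
    · obtain ⟨i, hi, K, hK, hlt⟩ := exists_closer G H hne
      have := inc_le K H
      rw [hf i hi G K hK]
      exact ih _ (by omega) K rfl

/-- Rank function of a permutation (one-line notation `w`). -/
def rk (w : ℕ → ℕ) (x y : ℕ) : ℕ := ∑ p ∈ Finset.range x, if w p < y then 1 else 0

/-- The intermediate permutations in a reduced word of the longest element. -/
def wst (k j p : ℕ) : ℕ :=
  if p < j then k - 1 - p else if p = j then k else if p ≤ k then k - p else p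

lemma rk_succ (w : ℕ → ℕ) (x y : ℕ) :
    rk w (x + 1) y = rk w x y + if w x < y then 1 else 0 := by
  rw [rk, Finset.sum_range_succ, rk]

lemma rk_wst_off {k j : ℕ} (hj : j < k) (x y : ℕ) (hx : x ≠ j + 1) :
    rk (wst k j) x y = rk (wst k (j + 1)) x y := by
  rcases Nat.lt_or_ge x (j + 1) with h | h
  · unfold rk
    refine Finset.sum_congr rfl fun p hp => ?_
    have hp := Finset.mem_range.1 hp
    have : wst k j p = wst k (j + 1) p := by
      unfold wst; split_ifs <;> omega
    rw [this]
  · have h' : j + 2 ≤ x := by omega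
    clear hx h
    induction x, h' using Nat.le_induction with
    | base =>
      rw [rk_succ, rk_succ, rk_succ, rk_succ]
      have h1 : wst k j j = k := by simp [wst]
      have h2 : wst k j (j + 1) = k - (j + 1) := by unfold wst; split_ifs <;> omega
      have h3 : wst k (j + 1) j = k - (j + 1) := by unfold wst; split_ifs <;> omega
      have h4 : wst k (j + 1) (j + 1) = k := by simp [wst]
      rw [h1, h2, h3, h4]
      have : rk (wst k j) j y = rk (wst k (j + 1)) j y := by
        unfold rk
        refine Finset.sum_congr rfl fun p hp => ?_
        have hp := Finset.mem_range.1 hp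
        have : wst k j p = wst k (j + 1) p := by
          unfold wst; split_ifs <;> omega
        rw [this]
      rw [this]; omega
    | succ x hx ih =>
      rw [rk_succ, rk_succ, ih]
      have : wst k j x = wst k (j + 1) x := by
        unfold wst; split_ifs <;> omega
      rw [this]

lemma wst_next (k : ℕ) : wst k 0 = wst (k + 1) (k + 1) := by
  funext p; unfold wst; split_ifs <;> omega

lemma rk_id (x y : ℕ) : rk (wst 0 0) x y = min x y := by
  induction x with
  | zero => simp [rk]
  | succ x ih =>
    rw [rk_succ, ih]
    have : wst 0 0 x = x := by unfold wst; split_ifs <;> omega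
    rw [this]; split_ifs <;> omega

lemma rk_long {x y : ℕ} (hx : x ≤ n + 1) (hy : y ≤ n + 1) :
    rk (wst n 0) x y = x + y - (n + 1) := by
  induction x with
  | zero => simp [rk]; omega
  | succ x ih =>
    rw [rk_succ, ih (by omega)]
    have : wst n 0 x = n - x := by unfold wst; split_ifs <;> omega
    rw [this]; split_ifs <;> omega

lemma Pos.congr {r r' : ℕ → ℕ → ℕ} (h : ∀ x y, x ≤ n + 1 → y ≤ n + 1 → r x y = r' x y)
    (G H : CompleteFlag F n) : Pos r G H ↔ Pos r' G H := by
  unfold Pos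
  refine forall₄_congr fun x y hx hy => ?_
  rw [h x y hx hy]

lemma pos_id (G H : CompleteFlag F n) : Pos (rk (wst 0 0)) G H ↔ G = H := by
  constructor
  · intro h
    apply ext_S
    intro k hk
    have h1 := h (k + 1) (k + 1) (by omega) (by omega)
    rw [rk_id, min_self] at h1
    have h2 : G.S (k + 1) ⊓ H.S (k + 1) = G.S (k + 1) :=
      Submodule.eq_of_le_of_finrank_eq inf_le_left (by rw [h1, S_finrank _ (by omega)])
    have h3 : G.S (k + 1) ⊓ H.S (k + 1) = H.S (k + 1) :=
      Submodule.eq_of_le_of_finrank_eq inf_le_right (by rw [h1, S_finrank _ (by omega)])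
    rw [← h2, h3]
  · rintro rfl x y hx hy
    rw [rk_id]
    rcases le_total x y with h | h
    · rw [inf_eq_right.2 (G.S_mono h), S_finrank _ hx, min_eq_left h]
    · rw [inf_eq_left.2 (G.S_mono h), S_finrank _ hy, min_eq_right h]

lemma pos_long (G H : CompleteFlag F n) :
    Pos (fun x y => x + y - (n + 1)) G H ↔ G.Opposite H := by
  rw [opposite_iff]
  constructor
  · intro h k hk
    have := h (n + 1 - k) k (by omega) hk
    rw [← Submodule.finrank_eq_zero (R := F), this]
    show n + 1 - k + k - (n + 1) = 0
    omega
  · intro h x y hx hy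
    have h0 := h y hy
    have hge : x + y - (n + 1) ≤ finrank F (G.S y ⊓ H.S x : Submodule F (Fin (n + 1) → F)) := by
      have h1 := Submodule.finrank_sup_add_finrank_inf_eq (G.S y) (H.S x)
      have h2 : finrank F (G.S y ⊔ H.S x : Submodule F (Fin (n + 1) → F)) ≤ n + 1 := by
        calc _ ≤ finrank F (Fin (n + 1) → F) := Submodule.finrank_le _
          _ = n + 1 := by simp
      rw [S_finrank _ hx, S_finrank _ hy] at h1
      omega
    refine le_antisymm ?_ hge
    rcases le_total x (n + 1 - y) with hxy | hxy
    · have : G.S y ⊓ H.S x = ⊥ := by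
        rw [eq_bot_iff, ← h0]; exact inf_le_inf_left _ (H.S_mono hxy)
      rw [this, finrank_bot]; omega
    · have := finrank_inf_le_succ (G.S y) _ _ (H.S_mono hxy) (d := x - (n + 1 - y)) (e := 0)
        (by rw [S_finrank _ (by omega), S_finrank _ (by omega)]; omega)
        (by rw [h0, finrank_bot])
      show _ ≤ x + y - (n + 1)
      omega

lemma pos_wst_long (G H : CompleteFlag F n) :
    Pos (rk (wst n 0)) G H ↔ G.Opposite H := by
  rw [← pos_long]
  exact Pos.congr (fun x y hx hy => rk_long hx hy) G H

/-- Rank function of `w₀ s_i`. -/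
def rv (n i x y : ℕ) : ℕ := (x + y - (n + 1)) + if x = i + 1 ∧ y = n - i then 1 else 0

lemma pos_rv_symm {i : ℕ} (hi : i < n) (G H : CompleteFlag F n) :
    Pos (rv n i) G H ↔ Pos (rv n (n - 1 - i)) H G := by
  unfold Pos
  have key : ∀ x y, rv n i x y = rv n (n - 1 - i) y x := by
    intro x y; unfold rv; split_ifs <;> omega
  constructor
  · intro h x y hx hy
    rw [inf_comm, h y x hy hx, key]
  · intro h x y hx hy
    rw [inf_comm, h y x hy hx, key]

section matrices

open Classical in
/-- Matrix of a relation on flags. -/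
noncomputable def rel (R : CompleteFlag F n → CompleteFlag F n → Prop) :
    Matrix (CompleteFlag F n) (CompleteFlag F n) ℝ :=
  Matrix.of fun G H => if R G H then 1 else 0

/-- The Hecke operator. -/
noncomputable def Tm (F : Type) [Field F] (n i : ℕ) :
    Matrix (CompleteFlag F n) (CompleteFlag F n) ℝ := rel fun G H => Adj i G H ∧ G ≠ H

/-- The panel matrix. -/
noncomputable def Pm (F : Type) [Field F] (n i : ℕ) :
    Matrix (CompleteFlag F n) (CompleteFlag F n) ℝ := rel fun G H => Adj i G H

/-- The opposition matrix. -/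
noncomputable def Am (F : Type) [Field F] (n : ℕ) :
    Matrix (CompleteFlag F n) (CompleteFlag F n) ℝ := rel fun G H => G.Opposite H

lemma rel_congr {R R' : CompleteFlag F n → CompleteFlag F n → Prop}
    (h : ∀ G H, R G H ↔ R' G H) : rel R = rel R' := by
  have : R = R' := by funext G H; exact propext (h G H)
  rw [this]

lemma rel_transpose (R : CompleteFlag F n → CompleteFlag F n → Prop) :
    (rel R).transpose = rel fun G H => R H G := by
  ext G H; simp [rel]

lemma Tm_eq [DecidableEq (CompleteFlag F n)] (i : ℕ) : Tm F n i = Pm F n i - 1 := by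
  ext G H
  simp only [Tm, Pm, rel, Matrix.of_apply, Matrix.sub_apply, Matrix.one_apply]
  by_cases h : G = H
  · subst h; simp [Adj.refl]
  · by_cases h2 : Adj i G H <;> simp [h, h2]

variable [Fintype F] [Fintype (CompleteFlag F n)]

lemma Pm_sq {i : ℕ} (hi : i < n) :
    Pm F n i * Pm F n i = ((Fintype.card F : ℝ) + 1) • Pm F n i := by
  classical
  ext G H
  simp only [Pm, rel, Matrix.mul_apply, Matrix.of_apply, Matrix.smul_apply, smul_eq_mul,
    mul_ite, mul_one, mul_zero]
  by_cases h : Adj i G H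
  · rw [if_pos h]
    have : ∀ K, (if Adj i K H then (if Adj i G K then (1 : ℝ) else 0) else 0) =
        if Adj i G K then 1 else 0 := by
      intro K
      by_cases hK : Adj i G K
      · rw [if_pos (hK.symm.trans h), if_pos hK]
      · simp [hK]
    rw [Finset.sum_congr rfl fun K _ => this K, Finset.sum_boole]
    have hc := card_panel G hi
    rw [Nat.card_eq_fintype_card, Fintype.card_subtype] at hc
    rw [hc]; push_cast; rfl
  · rw [if_neg h]
    refine Finset.sum_eq_zero fun K _ => ?_
    split_ifs with h1 h2
    · exact absurd (h2.trans h1) h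
    · rfl
    · rfl

lemma Tm_sq [DecidableEq (CompleteFlag F n)] {i : ℕ} (hi : i < n) :
    (Tm F n i - (Fintype.card F : ℝ) • 1) * (Tm F n i + 1) = 0 := by
  rw [Tm_eq]
  have := Pm_sq (F := F) hi
  rw [sub_add_cancel, sub_mul, sub_mul, this]
  rw [add_smul, Matrix.smul_mul, one_mul, one_smul]
  abel

lemma step_mul {i a b : ℕ} (hi : i < n) (hab : a < b) (hb : b ≤ n) {r r' : ℕ → ℕ → ℕ}
    (hoff : ∀ x y, x ≠ i + 1 → r' x y = r x y)
    (hr1 : ∀ y, r (i + 1) y = r i y + if a < y then 1 else 0)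
    (hr1' : ∀ y, r' (i + 1) y = r i y + if b < y then 1 else 0)
    (hr2 : ∀ y, r (i + 2) y = r i y + (if a < y then 1 else 0) + if b < y then 1 else 0) :
    rel (F := F) (n := n) (Pos r') = rel (Pos r) * Tm F n i := by
  classical
  ext G H
  simp only [Tm, rel, Matrix.mul_apply, Matrix.of_apply, mul_ite, mul_one, mul_zero]
  by_cases h : Pos r' G H
  · rw [if_pos h]
    obtain ⟨K, hK, hadj, hne⟩ := (step_iff hi hab hb hoff hr1 hr1' hr2 G H).1 h
    rw [Finset.sum_eq_single K]
    · rw [if_pos ⟨hadj, hne⟩, if_pos hK]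
    · intro L _ hL
      split_ifs with h1 h2
      · exact absurd (step_unique hi hab hb hoff hr1 hr1' hr2 h2 hK (h1.1.trans hadj.symm)) hL
      · rfl
      · rfl
    · simp
  · rw [if_neg h]
    symm
    refine Finset.sum_eq_zero fun K _ => ?_
    split_ifs with h1 h2
    · exact absurd ((step_iff hi hab hb hoff hr1 hr1' hr2 G H).2 ⟨K, h2, h1⟩) h
    · rfl
    · rfl

lemma chain_step {k j : ℕ} (hk : k ≤ n) (hj : j < k) :
    rel (F := F) (n := n) (Pos (rk (wst k j))) = rel (Pos (rk (wst k (j + 1)))) * Tm F n j := by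
  have h3 : wst k (j + 1) j = k - (j + 1) := by unfold wst; split_ifs <;> omega
  have h4 : wst k (j + 1) (j + 1) = k := by simp [wst]
  refine step_mul (a := k - (j + 1)) (b := k) (by omega) (by omega) hk
    (fun x y hx => rk_wst_off hj x y hx) ?_ ?_ ?_
  · intro y; rw [rk_succ, h3]
  · intro y
    rw [rk_succ, rk_wst_off hj j y (by omega)]
    simp [wst]
  · intro y; rw [rk_succ, rk_succ, h3, h4]

lemma Tm_transpose (i : ℕ) : (Tm F n i).transpose = Tm F n i := by
  rw [Tm, rel_transpose]
  exact rel_congr fun G H => ⟨fun h => ⟨h.1.symm, h.2.symm⟩, fun h => ⟨h.1.symm, h.2.symm⟩⟩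

lemma Am_transpose : (Am F n).transpose = Am F n := by
  rw [Am, rel_transpose]
  refine rel_congr fun G H => ?_
  rw [opposite_iff, opposite_iff]
  constructor
  · intro h k hk
    have := h (n + 1 - k) (by omega)
    rwa [inf_comm, show n + 1 - (n + 1 - k) = k by omega] at this
  · intro h k hk
    have := h (n + 1 - k) (by omega)
    rwa [inf_comm, show n + 1 - (n + 1 - k) = k by omega] at this

lemma Am_eq {i : ℕ} (hi : i < n) : Am F n = rel (Pos (rv n i)) * Tm F n i := by
  have : Am F n = rel (Pos (fun x y => x + y - (n + 1))) :=
    rel_congr fun G H => (pos_long G H).symm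
  rw [this]
  refine step_mul (a := n - i - 1) (b := n - i) hi (by omega) (by omega) ?_ ?_ ?_ ?_
  · intro x y hx; simp [rv, hx]
  · intro y; unfold rv; split_ifs <;> omega
  · intro y; unfold rv; split_ifs <;> omega
  · intro y; unfold rv; split_ifs <;> omega

lemma comm {i : ℕ} (hi : i < n) : Tm F n (n - 1 - i) * Am F n = Am F n * Tm F n i := by
  have h2 : Am F n = Tm F n (n - 1 - i) * rel (Pos (rv n i)) := by
    have := congrArg Matrix.transpose (Am_eq (F := F) (n := n) (i := n - 1 - i) (by omega))
    rw [Am_transpose, Matrix.transpose_mul, Tm_transpose, rel_transpose] at this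
    rw [this]
    congr 1
    exact rel_congr fun G H => (pos_rv_symm hi G H).symm
  calc _ = Tm F n (n - 1 - i) * (rel (Pos (rv n i)) * Tm F n i) := by rw [← Am_eq hi]
    _ = _ := by rw [← Matrix.mul_assoc, ← h2]

end matrices

end CompleteFlag

namespace HeckeBound

open Module

/-- A reduced word for the longest element. -/
def word : ℕ → List ℕ
  | 0 => []
  | n + 1 => word n ++ (List.range (n + 1)).reverse

lemma word_lt (n : ℕ) : ∀ i ∈ word n, i < n := by
  induction n with
  | zero => simp [word]
  | succ n ih =>
    intro i hi
    simp only [word, List.mem_append, List.mem_reverse, List.mem_range] at hi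
    rcases hi with h | h
    · have := ih i h; omega
    · exact h

lemma word_sum (e : ℕ → ℕ) (n : ℕ) :
    ((word n).map e).sum = ∑ i ∈ Finset.range n, (n - i) * e i := by
  induction n with
  | zero => simp [word]
  | succ n ih =>
    have h1 : (((List.range (n + 1)).reverse).map e).sum = ∑ i ∈ Finset.range (n + 1), e i := by
      rw [List.map_reverse, List.sum_reverse]
      rfl
    rw [word, List.map_append, List.sum_append, ih, h1]
    have h2 : ∑ i ∈ Finset.range n, (n - i) * e i = ∑ i ∈ Finset.range (n + 1), (n - i) * e i := by
      rw [Finset.sum_range_succ]; simp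
    rw [h2, ← Finset.sum_add_distrib]
    refine Finset.sum_congr rfl fun i hi => ?_
    have := Finset.mem_range.1 hi
    rw [show n + 1 - i = (n - i) + 1 by omega]; ring

lemma word_sum_symm (e : ℕ → ℕ) (n : ℕ) (he : ∀ i < n, e (n - 1 - i) = e i) :
    2 * ((word n).map e).sum = (n + 1) * ∑ i ∈ Finset.range n, e i := by
  have h : ((word n).map e).sum = ∑ i ∈ Finset.range n, (i + 1) * e i := by
    rw [word_sum, ← Finset.sum_range_reflect]
    refine Finset.sum_congr rfl fun i hi => ?_
    have := Finset.mem_range.1 hi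
    rw [he i this, show n - (n - 1 - i) = i + 1 by omega]
  rw [two_mul]
  nth_rewrite 2 [h]
  rw [word_sum, ← Finset.sum_add_distrib, Finset.mul_sum]
  refine Finset.sum_congr rfl fun i hi => ?_
  have := Finset.mem_range.1 hi
  rw [← add_mul]; congr 1; omega

lemma word_prod {R : Type*} [Monoid R] (T : ℕ → R) (M : ℕ → ℕ → R) (n : ℕ)
    (hM0 : M 0 0 = 1) (hM : ∀ k < n, M k 0 = M (k + 1) (k + 1))
    (hMs : ∀ k ≤ n, ∀ j < k, M k j = M k (j + 1) * T j) :
    M n 0 = ((word n).map T).prod := by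
  have blk : ∀ k ≤ n, ∀ j ≤ k, M k 0 = M k j * (((List.range j).reverse).map T).prod := by
    intro k hk j
    induction j with
    | zero => intro _; simp
    | succ j ih =>
      intro hj
      rw [ih (by omega), hMs k hk j (by omega), List.range_succ]
      simp [mul_assoc]
  have : ∀ k ≤ n, M k 0 = ((word k).map T).prod := by
    intro k
    induction k with
    | zero => intro _; simp [word, hM0]
    | succ k ih =>
      intro hk
      rw [blk (k + 1) hk (k + 1) le_rfl, ← hM k (by omega), ih (by omega), word, List.map_append,
        List.prod_append]
  exact this n le_rfl

lemma abs_det_T {S : Type*} [AddCommGroup S] [Module ℝ S] [FiniteDimensional ℝ S]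
    {q : ℝ} (hq : 1 < q) (T : End ℝ S) (hT : (T - q • 1) * (T + 1) = 0) :
    |LinearMap.det T| = q ^ finrank ℝ (LinearMap.ker (T - q • 1)) := by
  set N := LinearMap.ker (T - q • (1 : End ℝ S)) with hN
  have hmem : ∀ x ∈ N, T x = q • x := by
    intro x hx
    have : T x - q • x = 0 := by simpa [hN] using hx
    exact sub_eq_zero.1 this
  have hinv : N ≤ N.comap T := by
    intro x hx
    rw [Submodule.mem_comap, hmem x hx]
    exact N.smul_mem _ hx
  rw [LinearMap.det_eq_det_mul_det N T hinv]
  have h1 : T.restrict hinv = q • (LinearMap.id : N →ₗ[ℝ] N) := by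
    ext x
    simp [hmem x x.2]
  have h2 : N.mapQ N T hinv = (-1 : ℝ) • (LinearMap.id : (S ⧸ N) →ₗ[ℝ] (S ⧸ N)) := by
    apply Submodule.linearMap_qext
    ext x
    simp only [LinearMap.comp_apply, Submodule.mkQ_apply, Submodule.mapQ_apply,
      LinearMap.smul_apply, LinearMap.id_apply]
    rw [← sub_eq_zero, neg_one_smul, sub_neg_eq_add, ← Submodule.Quotient.mk_add,
      Submodule.Quotient.mk_eq_zero, hN, LinearMap.mem_ker]
    have := LinearMap.congr_fun hT x
    simpa using this
  rw [h1, h2, LinearMap.det_smul, LinearMap.det_smul, LinearMap.det_id, LinearMap.det_id]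
  simp [abs_mul, abs_pow, abs_of_pos (by linarith : (0 : ℝ) < q)]

lemma eigen_bound {S : Type*} [AddCommGroup S] [Module ℝ S] [FiniteDimensional ℝ S]
    [Nontrivial S] {q μ : ℝ} (hq : 1 < q) (n : ℕ) (hn : 1 ≤ n) (T : ℕ → End ℝ S) (A : End ℝ S)
    (hT : ∀ i < n, (T i - q • 1) * (T i + 1) = 0)
    (hcomm : ∀ i < n, T (n - 1 - i) * A = A * T i)
    (hA : A = ((word n).map T).prod) (hA2 : A * A = μ • 1)
    (hfix : ∀ v, (∀ i < n, T i v = q • v) → v = 0) : μ ≤ q ^ (n ^ 2 - 1) := by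
  have hq0 : 0 < q := by linarith
  rcases le_or_gt μ 0 with hμ | hμ
  · exact hμ.trans (by positivity)
  set d := finrank ℝ S with hd
  have hd0 : 0 < d := finrank_pos
  set e : ℕ → ℕ := fun i => finrank ℝ (LinearMap.ker (T i - q • 1)) with he
  have hdetT : ∀ i < n, |LinearMap.det (T i)| = q ^ e i := fun i hi => abs_det_T hq _ (hT i hi)
  have hdet2 : LinearMap.det A * LinearMap.det A = μ ^ d := by
    rw [← map_mul, hA2, LinearMap.det_smul, map_one, mul_one]
  have hdet0 : LinearMap.det A ≠ 0 := by
    intro h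
    rw [h, mul_zero] at hdet2
    exact (pow_pos hμ d).ne hdet2
  have hsymm : ∀ i < n, e (n - 1 - i) = e i := by
    intro i hi
    have h := congrArg LinearMap.det (hcomm i hi)
    rw [map_mul, map_mul, mul_comm] at h
    have h := mul_left_cancel₀ hdet0 h
    have h2 : q ^ e (n - 1 - i) = q ^ e i := by
      rw [← hdetT _ (by omega), ← hdetT i hi, h]
    exact pow_right_injective₀ hq0 hq.ne' h2
  have hdetA : |LinearMap.det A| = q ^ ((word n).map e).sum := by
    rw [hA]
    have : ∀ l : List ℕ, (∀ i ∈ l, i < n) →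
        |LinearMap.det ((l.map T).prod)| = q ^ (l.map e).sum := by
      intro l
      induction l with
      | nil => simp
      | cons i l ih =>
        intro hl
        rw [List.map_cons, List.prod_cons, map_mul, abs_mul, List.map_cons, List.sum_cons,
          pow_add, ih (fun j hj => hl j (List.mem_cons_of_mem _ hj)),
          hdetT i (hl i List.mem_cons_self)]
    exact this _ (word_lt n)
  have hsum : ∑ i ∈ Finset.range n, e i ≤ (n - 1) * d := by
    set Φ : S →ₗ[ℝ] ((i : Fin n) → S ⧸ LinearMap.ker (T i - q • 1)) :=
      LinearMap.pi fun i => (LinearMap.ker (T i - q • 1)).mkQ with hΦ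
    have hinj : Function.Injective Φ := by
      rw [← LinearMap.ker_eq_bot, LinearMap.ker_eq_bot']
      intro v hv
      apply hfix
      intro i hi
      have h := congrFun hv ⟨i, hi⟩
      simp only [hΦ, LinearMap.pi_apply, Submodule.mkQ_apply, Pi.zero_apply,
        Submodule.Quotient.mk_eq_zero, LinearMap.mem_ker] at h
      exact sub_eq_zero.1 (by simpa using h)
    have h1 := LinearMap.finrank_le_finrank_of_injective hinj
    rw [Module.finrank_pi_fintype] at h1
    have h2 : ∀ i : Fin n, finrank ℝ (S ⧸ LinearMap.ker (T i - q • 1)) + e i = d :=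
      fun i => Submodule.finrank_quotient_add_finrank _
    have h3 : ∑ i : Fin n, finrank ℝ (S ⧸ LinearMap.ker (T i - q • 1)) + ∑ i : Fin n, e i
        = n * d := by
      rw [← Finset.sum_add_distrib, Finset.sum_congr rfl fun i _ => h2 i]; simp
    rw [Finset.sum_range, Nat.sub_mul, one_mul]
    omega
  have hμd : μ ^ d = q ^ ((n + 1) * ∑ i ∈ Finset.range n, e i) := by
    rw [← hdet2, ← abs_mul_abs_self, hdetA, ← pow_add, ← two_mul, word_sum_symm e n hsymm]
  have hle : μ ^ d ≤ (q ^ (n ^ 2 - 1)) ^ d := by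
    rw [hμd, ← pow_mul]
    apply pow_le_pow_right₀ hq.le
    have : n ^ 2 - 1 = (n + 1) * (n - 1) := by
      obtain ⟨m, rfl⟩ : ∃ m, n = m + 1 := ⟨n - 1, by omega⟩
      simp only [Nat.add_sub_cancel]
      have : (m + 1) ^ 2 = (m + 1 + 1) * m + 1 := by ring
      omega
    rw [this, mul_assoc]
    exact Nat.mul_le_mul_left _ hsum
  exact le_of_pow_le_pow_left₀ hd0.ne' (by positivity) hle

theorem norm_bound {E : Type*} [NormedAddCommGroup E] [InnerProductSpace ℝ E]
    [FiniteDimensional ℝ E] {q : ℝ} (hq : 1 < q) (n : ℕ) (hn : 1 ≤ n)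
    (T : ℕ → End ℝ E) (A : End ℝ E)
    (hTs : ∀ i < n, (T i).IsSymmetric) (hAs : A.IsSymmetric)
    (hT : ∀ i < n, (T i - q • 1) * (T i + 1) = 0)
    (hcomm : ∀ i < n, T (n - 1 - i) * A = A * T i)
    (hA : A = ((word n).map T).prod) (u : E) (hu : ∀ i < n, T i u = q • u)
    (hfix : ∀ v, (∀ i < n, T i v = q • v) → v ∈ Submodule.span ℝ {u})
    (v : E) (hv : inner ℝ u v = 0) : ‖A v‖ ^ 2 ≤ q ^ (n ^ 2 - 1) * ‖v‖ ^ 2 := by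
  classical
  set U : Submodule ℝ E := (Submodule.span ℝ {u})ᗮ with hU
  have memU : ∀ x, x ∈ U ↔ inner ℝ u x = 0 := fun x => Submodule.mem_orthogonal_singleton_iff_inner_right
  have hTU : ∀ i < n, ∀ x ∈ U, T i x ∈ U := by
    intro i hi x hx
    rw [memU] at hx ⊢
    rw [← hTs i hi, hu i hi, inner_smul_left, hx, mul_zero]
  have hprod : ∀ (P : Submodule ℝ E), (∀ i < n, ∀ x ∈ P, T i x ∈ P) → ∀ x ∈ P, A x ∈ P := by
    intro P hP
    rw [hA]
    have : ∀ l : List ℕ, (∀ i ∈ l, i < n) → ∀ x ∈ P, (l.map T).prod x ∈ P := by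
      intro l
      induction l with
      | nil => simp
      | cons i l ih =>
        intro hl x hx
        rw [List.map_cons, List.prod_cons, Module.End.mul_apply]
        exact hP i (hl i List.mem_cons_self) _ (ih (fun j hj => hl j (List.mem_cons_of_mem _ hj)) x hx)
    exact this _ (word_lt n)
  have hAU := hprod U hTU
  have hBU : ∀ x ∈ U, (A * A) x ∈ U := fun x hx => hAU _ (hAU x hx)
  have hBs : ((A * A).restrict hBU).IsSymmetric := by
    intro x y
    change inner ℝ (A (A x)) (y : E) = inner ℝ (x : E) (A (A y))
    rw [hAs, hAs]
  have hcomm2 : ∀ i < n, T i * (A * A) = (A * A) * T i := by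
    intro i hi
    have h1 := hcomm i hi
    have h2 := hcomm (n - 1 - i) (by omega)
    rw [show n - 1 - (n - 1 - i) = i by omega] at h2
    rw [← mul_assoc, h2, mul_assoc, h1, mul_assoc]
  have heig : ∀ (μ : ℝ) (x : E), x ∈ U → x ≠ 0 → A (A x) = μ • x → μ ≤ q ^ (n ^ 2 - 1) := by
    intro μ x hxU hx0 hx
    set P : Submodule ℝ E := U ⊓ Module.End.eigenspace (A * A) μ with hP
    have hPmem : ∀ y ∈ P, A (A y) = μ • y := by
      intro y hy
      exact Module.End.mem_eigenspace_iff.1 hy.2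
    have hTP : ∀ i < n, ∀ y ∈ P, T i y ∈ P := by
      intro i hi y hy
      refine ⟨hTU i hi y hy.1, Module.End.mem_eigenspace_iff.2 ?_⟩
      rw [← Module.End.mul_apply, ← hcomm2 i hi, Module.End.mul_apply, Module.End.mul_apply,
        hPmem y hy, map_smul]
    have hAP := hprod P hTP
    have : Nontrivial P := by
      refine ⟨⟨⟨x, hxU, Module.End.mem_eigenspace_iff.2 hx⟩, 0, ?_⟩⟩
      intro h
      exact hx0 (congrArg Subtype.val h)
    let T' : ℕ → End ℝ P := fun i => if h : i < n then (T i).restrict (hTP i h) else 0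
    let A' : End ℝ P := A.restrict hAP
    have hT' : ∀ i < n, ∀ y : P, (T' i y : E) = T i y := by
      intro i hi y
      simp only [T', dif_pos hi]; rfl
    have hA' : ∀ y : P, (A' y : E) = A y := fun y => rfl
    refine eigen_bound (S := P) hq n hn T' A' ?_ ?_ ?_ ?_ ?_
    · intro i hi
      ext y
      have := LinearMap.congr_fun (hT i hi) (y : E)
      simp only [Module.End.mul_apply, LinearMap.sub_apply, LinearMap.add_apply,
        LinearMap.smul_apply, Module.End.one_apply, LinearMap.zero_apply] at this ⊢
      simpa [hT' i hi] using this
    · intro i hi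
      ext y
      have := LinearMap.congr_fun (hcomm i hi) (y : E)
      simp only [Module.End.mul_apply] at this ⊢
      rw [hT' _ (by omega), hA', hA', hT' i hi, this]
    · have : ∀ l : List ℕ, (∀ i ∈ l, i < n) → ∀ y : P,
          (((l.map T').prod y : P) : E) = (l.map T).prod (y : E) := by
        intro l
        induction l with
        | nil => simp
        | cons i l ih =>
          intro hl y
          rw [List.map_cons, List.prod_cons, Module.End.mul_apply, hT' i (hl i List.mem_cons_self),
            ih (fun j hj => hl j (List.mem_cons_of_mem _ hj)), List.map_cons, List.prod_cons,
            Module.End.mul_apply]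
      ext y
      rw [this _ (word_lt n), hA', ← hA]
    · ext y
      simp only [Module.End.mul_apply]
      rw [hA', hA', hPmem y y.2]; rfl
    · intro y hy
      have h1 : (y : E) ∈ Submodule.span ℝ {u} := by
        apply hfix
        intro i hi
        rw [← hT' i hi, hy i hi]; rfl
      have h2 : (y : E) ∈ U := y.2.1
      have h3 : inner ℝ (y : E) (y : E) = 0 := (Submodule.mem_orthogonal _ _).1 h2 _ h1
      exact Subtype.ext (inner_self_eq_zero.1 h3)
  -- diagonalize
  have hvU : v ∈ U := (memU v).2 hv
  let w : U := ⟨v, hvU⟩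
  let b := hBs.eigenvectorBasis rfl
  have hb : ∀ i, A (A (b i : E)) = (hBs.eigenvalues rfl i : ℝ) • (b i : E) := by
    intro i
    have := hBs.apply_eigenvectorBasis rfl i
    exact congrArg Subtype.val this
  have hle : ∀ i, hBs.eigenvalues rfl i ≤ q ^ (n ^ 2 - 1) := by
    intro i
    refine heig _ (b i) (b i).2 ?_ (hb i)
    intro h
    have h1 : ‖b i‖ = 1 := b.orthonormal.1 i
    have h2 : b i = 0 := Subtype.ext h
    rw [h2, norm_zero] at h1
    exact zero_ne_one h1
  have hn1 : ‖A v‖ ^ 2 = inner ℝ w ((A * A).restrict hBU w) := by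
    rw [← real_inner_self_eq_norm_sq]
    exact hAs v (A v)
  have hn2 : ‖v‖ ^ 2 = ∑ i, (inner ℝ w (b i)) * (inner ℝ (b i) w) := by
    rw [b.sum_inner_mul_inner]
    exact (real_inner_self_eq_norm_sq v).symm
  rw [hn1, ← b.sum_inner_mul_inner, hn2, Finset.mul_sum]
  refine Finset.sum_le_sum fun i _ => ?_
  have h1 : inner ℝ (b i) ((A * A).restrict hBU w) = hBs.eigenvalues rfl i * inner ℝ (b i) w := by
    rw [← hBs, hBs.apply_eigenvectorBasis rfl i, inner_smul_left]
    rfl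
  rw [h1, real_inner_comm w (b i)]
  have := hle i
  nlinarith [mul_self_nonneg (inner ℝ (b i) w)]

end HeckeBound

namespace CompleteFlag

open Module HeckeBound

section final

variable {F : Type} [Field F] {n : ℕ} [Fintype F] [Fintype (CompleteFlag F n)]
  [DecidableEq (CompleteFlag F n)]

/-- Matrices as operators on the Euclidean space of functions on flags. -/
noncomputable def Φ : Matrix (CompleteFlag F n) (CompleteFlag F n) ℝ ≃ₐ[ℝ]
    End ℝ (EuclideanSpace ℝ (CompleteFlag F n)) :=
  Matrix.toLinAlgEquiv (EuclideanSpace.basisFun (CompleteFlag F n) ℝ).toBasis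

lemma Φ_apply (M : Matrix (CompleteFlag F n) (CompleteFlag F n) ℝ)
    (v : EuclideanSpace ℝ (CompleteFlag F n)) (G : CompleteFlag F n) :
    Φ M v G = ∑ H, M G H * v H := by
  have h : Φ M = Matrix.toEuclideanLin M := by
    rw [Matrix.toEuclideanLin_eq_toLin_orthonormal]; rfl
  rw [h]
  simp [Matrix.toLpLin_apply, Matrix.mulVec, dotProduct]

lemma Φ_symm {M : Matrix (CompleteFlag F n) (CompleteFlag F n) ℝ} (hM : M.transpose = M) :
    (Φ M).IsSymmetric := by
  intro v w
  simp only [PiLp.inner_apply, Φ_apply, RCLike.inner_apply, conj_trivial]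
  simp only [Finset.mul_sum, Finset.sum_mul]
  rw [Finset.sum_comm]
  refine Finset.sum_congr rfl fun G _ => Finset.sum_congr rfl fun H _ => ?_
  have : M H G = M G H := congrFun (congrFun hM G) H
  rw [this]; ring

/-- The all-ones vector. -/
noncomputable def ones (F : Type) [Field F] (n : ℕ) : EuclideanSpace ℝ (CompleteFlag F n) :=
  WithLp.toLp 2 fun _ => 1

lemma T_ones {i : ℕ} (hi : i < n) : Φ (Tm F n i) (ones F n) = (Fintype.card F : ℝ) • ones F n := by
  classical
  ext G
  rw [Φ_apply, Tm_eq]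
  have hc := card_panel G hi
  rw [Nat.card_eq_fintype_card, Fintype.card_subtype] at hc
  simp only [ones, Pm, rel, Matrix.sub_apply, Matrix.of_apply, mul_one, Finset.sum_sub_distrib,
    Finset.sum_boole, Matrix.one_apply, PiLp.smul_apply, smul_eq_mul]
  rw [hc, Finset.filter_eq]
  simp

lemma const_of_fix (v : EuclideanSpace ℝ (CompleteFlag F n))
    (hv : ∀ i < n, Φ (Tm F n i) v = (Fintype.card F : ℝ) • v) :
    v ∈ Submodule.span ℝ {ones F n} := by
  classical
  have hP : ∀ i < n, ∀ G, ∑ H, Pm F n i G H * v H = ((Fintype.card F : ℝ) + 1) * v G := by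
    intro i hi G
    have h := congrArg (fun x : EuclideanSpace ℝ (CompleteFlag F n) => x G) (hv i hi)
    simp only [Φ_apply, Tm_eq, Matrix.sub_apply, sub_mul, Finset.sum_sub_distrib,
      Matrix.one_apply, ite_mul, one_mul, zero_mul, PiLp.smul_apply, smul_eq_mul] at h
    simp only [Finset.sum_ite_eq, Finset.mem_univ, if_true] at h
    linarith
  have hc : ∀ G H, v G = v H := by
    refine connected (fun G => v G) ?_
    intro i hi G H hGH
    have h1 := hP i hi G
    have h2 := hP i hi H
    have h3 : ∀ K, Pm F n i G K = Pm F n i H K := by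
      intro K
      have : Adj i G K ↔ Adj i H K := ⟨fun h => hGH.symm.trans h, fun h => hGH.trans h⟩
      simp [Pm, rel, this]
    simp only [h3] at h1
    rw [h1] at h2
    have hpos : (0 : ℝ) < (Fintype.card F : ℝ) + 1 := by positivity
    exact mul_left_cancel₀ hpos.ne' h2
  rw [Submodule.mem_span_singleton]
  rcases isEmpty_or_nonempty (CompleteFlag F n) with h | ⟨⟨G⟩⟩
  · exact ⟨0, by ext K; exact (h.false K).elim⟩
  · refine ⟨v G, ?_⟩
    ext K
    simp [ones, hc G K]

lemma A_word : Φ (Am F n) = ((word n).map fun i => Φ (Tm F n i)).prod := by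
  have h := word_prod (Tm F n) (fun k j => rel (F := F) (n := n) (Pos (rk (wst k j)))) n
    ?_ ?_ ?_
  · have h1 : rel (F := F) (n := n) (Pos (rk (wst n 0))) = Am F n :=
      rel_congr fun G H => pos_wst_long G H
    rw [← h1, h, map_list_prod, List.map_map]
    rfl
  · ext G H
    simp [rel, pos_id, Matrix.one_apply]
  · intro k _
    simp only [wst_next]
  · intro k hk j hj
    exact chain_step hk hj

lemma A_ones : Φ (Am F n) (ones F n) =
    ((Fintype.card F : ℝ) ^ (word n).length) • ones F n := by
  rw [A_word]
  have : ∀ l : List ℕ, (∀ i ∈ l, i < n) → ((l.map fun i => Φ (Tm F n i)).prod) (ones F n) =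
      ((Fintype.card F : ℝ) ^ l.length) • ones F n := by
    intro l
    induction l with
    | nil => simp
    | cons i l ih =>
      intro hl
      rw [List.map_cons, List.prod_cons, Module.End.mul_apply,
        ih (fun j hj => hl j (List.mem_cons_of_mem _ hj)), map_smul,
        T_ones (hl i List.mem_cons_self), smul_smul, List.length_cons, pow_succ]
  exact this _ (word_lt n)

lemma A_bound (hn : 1 ≤ n) (v : EuclideanSpace ℝ (CompleteFlag F n))
    (hv : inner ℝ (ones F n) v = 0) :
    ‖Φ (Am F n) v‖ ^ 2 ≤ (Fintype.card F : ℝ) ^ (n ^ 2 - 1) * ‖v‖ ^ 2 := by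
  refine norm_bound (by exact_mod_cast Fintype.one_lt_card) n hn (fun i => Φ (Tm F n i))
    (Φ (Am F n)) (fun i _ => Φ_symm (Tm_transpose i)) (Φ_symm Am_transpose) ?_ ?_ A_word
    (ones F n) (fun i hi => T_ones hi) const_of_fix v hv
  · intro i hi
    have := congrArg Φ (Tm_sq (F := F) hi)
    rw [map_mul, map_sub, map_add, map_smul, map_one, map_zero] at this
    exact this
  · intro i hi
    have := congrArg Φ (comm (F := F) hi)
    rwa [map_mul, map_mul] at this

lemma word_length (n : ℕ) : 2 * (word n).length = n * (n + 1) := by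
  have h := word_sum_symm (fun _ => 1) n (fun _ _ => rfl)
  simp only [List.map_const', List.sum_replicate, smul_eq_mul, mul_one, Finset.sum_const,
    Finset.card_range] at h
  rw [h]; ring

theorem main_bound (hn : 1 ≤ n) (C : Finset (CompleteFlag F n))
    (hC : ∀ G ∈ C, ∀ H ∈ C, ¬ G.Opposite H) :
    (C.card : ℝ) * (1 + Real.sqrt (Fintype.card F) ^ (n + 1)) ≤
      (Fintype.card (CompleteFlag F n) : ℝ) := by
  classical
  set q : ℝ := (Fintype.card F : ℝ) with hq
  set s := Real.sqrt q with hs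
  have hq0 : 0 < q := by rw [hq]; exact_mod_cast Fintype.card_pos
  have hs0 : 0 < s := Real.sqrt_pos.2 hq0
  have hss : s ^ 2 = q := Real.sq_sqrt hq0.le
  set N : ℝ := (Fintype.card (CompleteFlag F n) : ℝ) with hN
  set c : ℝ := (C.card : ℝ) with hc
  rcases C.eq_empty_or_nonempty with h0 | ⟨G0, hG0⟩
  · have : c = 0 := by rw [hc, h0]; simp
    rw [this, zero_mul, hN]; positivity
  have hc0 : 0 < c := by rw [hc]; exact_mod_cast Finset.card_pos.2 ⟨G0, hG0⟩
  have hN0 : 0 < N := by rw [hN]; exact_mod_cast Fintype.card_pos_iff.2 ⟨G0⟩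
  set u := ones F n with hu
  set χ : EuclideanSpace ℝ (CompleteFlag F n) := WithLp.toLp 2 fun G => if G ∈ C then 1 else 0
    with hχ
  have huu : inner ℝ u u = N := by
    rw [PiLp.inner_apply]; simp [hu, ones, hN]
  have huχ : inner ℝ u χ = c := by
    simp [hu, ones, hχ, PiLp.inner_apply, hc]
  have hχχ : inner ℝ χ χ = c := by
    rw [PiLp.inner_apply]; simp [hχ, hc]
  set A := Φ (Am F n) with hA
  have hAsym : A.IsSymmetric := Φ_symm Am_transpose
  have hχA : inner ℝ χ (A χ) = 0 := by
    rw [PiLp.inner_apply]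
    refine Finset.sum_eq_zero fun G _ => ?_
    rw [hA, Φ_apply]
    by_cases hG : G ∈ C
    · have : ∑ H, Am F n G H * χ H = 0 := by
        refine Finset.sum_eq_zero fun H _ => ?_
        by_cases hH : H ∈ C
        · simp [Am, rel, hC G hG H hH]
        · simp [hχ, hH]
      rw [this]; simp
    · simp [hχ, hG]
  set t := c / N with ht
  have htN : t * N = c := by rw [ht]; field_simp
  set v := χ - t • u with hv
  have huv : inner ℝ u v = 0 := by
    rw [hv, inner_sub_right, inner_smul_right, huu, huχ, htN, sub_self]
  have hvu : inner ℝ v u = 0 := by rw [real_inner_comm, huv]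
  have hχv : χ = v + t • u := by rw [hv]; abel
  set D : ℝ := q ^ (word n).length with hD
  have hAu : A u = D • u := A_ones
  have huAv : inner ℝ u (A v) = 0 := by
    rw [← hAsym, hAu, inner_smul_left, huv, mul_zero]
  have hvv : ‖v‖ ^ 2 = c - t * c := by
    have : inner ℝ χ χ = inner ℝ v v + t * t * N := by
      rw [hχv, inner_add_left, inner_add_right, inner_add_right, inner_smul_left,
        inner_smul_right, inner_smul_left, inner_smul_right, huv, hvu, huu]
      simp; ring
    rw [hχχ, real_inner_self_eq_norm_sq] at this
    rw [mul_assoc, htN] at this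
    linarith
  have hvAv : inner ℝ v (A v) = - (t * c * D) := by
    have : inner ℝ χ (A χ) = inner ℝ v (A v) + t * t * N * D := by
      rw [hχv, map_add, map_smul, hAu, inner_add_left, inner_add_right, inner_add_right,
        inner_smul_left, inner_smul_right, inner_smul_left, inner_smul_right, inner_smul_right,
        inner_smul_right, huAv, hvu, huu]
      simp; ring
    rw [hχA, mul_assoc t t N, htN] at this
    linarith
  have hbd := A_bound hn v huv
  rw [← hA, ← hq, ← hss, ← pow_mul, mul_comm 2, pow_mul, ← mul_pow] at hbd
  have hbd' : ‖A v‖ ≤ s ^ (n ^ 2 - 1) * ‖v‖ := by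
    exact le_of_sq_le_sq hbd (by positivity)
  have hcs : t * c * D ≤ s ^ (n ^ 2 - 1) * (c - t * c) := by
    have h1 : |inner ℝ v (A v)| ≤ ‖v‖ * ‖A v‖ := abs_real_inner_le_norm v (A v)
    have h2 : t * c * D ≤ |inner ℝ v (A v)| := by
      rw [hvAv, abs_neg]; exact le_abs_self _
    have h3 : ‖v‖ * ‖A v‖ ≤ ‖v‖ * (s ^ (n ^ 2 - 1) * ‖v‖) :=
      mul_le_mul_of_nonneg_left hbd' (norm_nonneg _)
    rw [← hvv]
    calc _ ≤ _ := h2.trans (h1.trans h3)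
      _ = _ := by ring
  have hDs : D = s ^ (n ^ 2 - 1) * s ^ (n + 1) := by
    rw [hD, ← hss, ← pow_mul, word_length, ← pow_add]
    congr 1
    have : 1 ≤ n ^ 2 := Nat.one_le_pow _ _ hn
    have h2 : n * (n + 1) = n ^ 2 + n := by ring
    omega
  rw [hDs] at hcs
  have h5 : t * c * s ^ (n + 1) ≤ c - t * c := by
    have hp : 0 < s ^ (n ^ 2 - 1) := by positivity
    refine le_of_mul_le_mul_left ?_ hp
    calc _ = t * c * (s ^ (n ^ 2 - 1) * s ^ (n + 1)) := by ring
      _ ≤ _ := hcs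
  have h6 : t * (1 + s ^ (n + 1)) ≤ 1 := by
    refine le_of_mul_le_mul_left ?_ hc0
    nlinarith
  calc c * (1 + s ^ (n + 1)) = N * (t * (1 + s ^ (n + 1))) := by rw [← htN]; ring
    _ ≤ N * 1 := mul_le_mul_of_nonneg_left h6 hN0.le
    _ = N := mul_one N

end final

end CompleteFlag

/-- If `C` is an EKR-set of complete flags in `F_q^{n+1}` (no two members opposite),
then `|C| · (1 + (√q)^{n+1}) ≤ N` where `N` is the total number of complete flags. -/
theorem EKR_complete_flags_bound (n : ℕ) (hn : 1 ≤ n)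
    (F : Type) [Field F] [Fintype F] (q : ℕ) (hq : q = Fintype.card F)
    (C : Set (CompleteFlag F n))
    (hC : ∀ F1 ∈ C, ∀ F2 ∈ C, ¬ F1.Opposite F2) :
    (Nat.card C : ℝ) * (1 + Real.sqrt q ^ (n + 1)) ≤ (Nat.card (CompleteFlag F n) : ℝ) := by
  classical
  let _ : Fintype (CompleteFlag F n) := Fintype.ofFinite _
  have h := CompleteFlag.main_bound hn C.toFinset (by simpa using hC)
  rw [hq, Nat.card_eq_fintype_card, Nat.card_eq_fintype_card, ← Set.toFinset_card]
  exact h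
end

section
/- Let m ≥ 2, n = 2m−1, q a prime power, and J ⊆ {1, …, n} a self-opposite type with m ∈ J. Fix a 1-dimensional subspace P of V = F_q^{n+1}, and let C be the set of all flags (U_k)_{k∈J} of type J in V with P ⊆ U_m. Then C is an EKR-set of flags of type J (no two of its members are opposite), and |C| · (1 + q^m) = v, where v is the total number of flags of type J in V; i.e., C attains the upper bound v/(1 + q^{(n+1)/2}). -/
/-- A flag of type `J ⊆ {1, …, n}` in `V = F^{n+1}`: a family of subspaces `(U_k)_{k∈J}`
with `dim U_k = k` and `U_k ⊆ U_l` whenever `k ≤ l`. -/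
structure FlagOfType (F : Type) [Field F] (n : ℕ) (J : Finset ℕ) where
  U : J → Submodule F (Fin (n + 1) → F)
  dim : ∀ k : J, Module.finrank F (U k) = (k : ℕ)
  mono : ∀ k l : J, (k : ℕ) ≤ (l : ℕ) → U k ≤ U l

/-- Two flags `(U_k)` and `(W_k)` of self-opposite type `J` are opposite if
`U_k ∩ W_{n+1−k} = 0` for all `k ∈ J`. -/
def FlagOfType.Opposite {F : Type} [Field F] {n : ℕ} {J : Finset ℕ}
    (F1 F2 : FlagOfType F n J) : Prop :=
  ∀ k l : J, (l : ℕ) = n + 1 - (k : ℕ) → F1.U k ⊓ F2.U l = ⊥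

theorem exists_equiv_map {F V : Type} [Field F] [AddCommGroup V] [Module F V]
    [FiniteDimensional F V] (v w : V) (hv : v ≠ 0) (hw : w ≠ 0) :
    ∃ g : V ≃ₗ[F] V, g v = w := by
  let ev := LinearEquiv.toSpanNonzeroSingleton F V v hv
  let ew := LinearEquiv.toSpanNonzeroSingleton F V w hw
  obtain ⟨g, hg⟩ := Submodule.exists_linearEquiv_restrict_eq (ev.symm.trans ew)
  refine ⟨g, ?_⟩
  have h := hg (ev 1)
  rw [LinearEquiv.trans_apply, LinearEquiv.symm_apply_apply] at h
  simpa [ev, ew] using h.symm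

theorem FlagOfType.ext_U {F : Type} [Field F] {n : ℕ} {J : Finset ℕ}
    (A B : FlagOfType F n J) (h : A.U = B.U) : A = B := by
  cases A; cases B; cases h; rfl

/-- Image of a flag under a linear automorphism. -/
def FlagOfType.mapE {F : Type} [Field F] {n : ℕ} {J : Finset ℕ}
    (g : (Fin (n + 1) → F) ≃ₗ[F] (Fin (n + 1) → F)) (A : FlagOfType F n J) :
    FlagOfType F n J where
  U k := (A.U k).map g.toLinearMap
  dim k := by
    rw [← A.dim k]
    exact LinearEquiv.finrank_map_eq g (A.U k)
  mono k l h := Submodule.map_mono (A.mono k l h)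

theorem FlagOfType.mapE_injective {F : Type} [Field F] {n : ℕ} {J : Finset ℕ}
    (g : (Fin (n + 1) → F) ≃ₗ[F] (Fin (n + 1) → F)) :
    Function.Injective (FlagOfType.mapE (J := J) g) := by
  intro A B h
  apply FlagOfType.ext_U
  funext k
  have : (FlagOfType.mapE g A).U k = (FlagOfType.mapE g B).U k := by rw [h]
  exact Submodule.map_injective_of_injective g.injective this

theorem FlagOfType.finite' {F : Type} [Field F] [Fintype F] {n : ℕ} {J : Finset ℕ} :
    Finite (FlagOfType F n J) :=
  Finite.of_injective (fun A : FlagOfType F n J => A.U) (fun A B h => FlagOfType.ext_U A B h)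

theorem FlagOfType.card_le {F : Type} [Field F] [Fintype F] {n : ℕ} {J : Finset ℕ} (k : J)
    (v w : Fin (n + 1) → F) (hv : v ≠ 0) (hw : w ≠ 0) :
    Nat.card {A : FlagOfType F n J // v ∈ A.U k} ≤
      Nat.card {A : FlagOfType F n J // w ∈ A.U k} := by
  have := FlagOfType.finite' (F := F) (n := n) (J := J)
  obtain ⟨g, hg⟩ := exists_equiv_map (F := F) v w hv hw
  apply Nat.card_le_card_of_injective
    (fun A : {A : FlagOfType F n J // v ∈ A.U k} =>
      (⟨FlagOfType.mapE g A.1, ⟨v, A.2, hg⟩⟩ : {A : FlagOfType F n J // w ∈ A.U k}))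
  intro A B h
  exact Subtype.ext (FlagOfType.mapE_injective g (congrArg Subtype.val h))

/-- **Sharp examples in projective spaces.** Let `m ≥ 2`, `n = 2m−1`, `J` a self-opposite
type with `m ∈ J`, and `P` a fixed `1`-dimensional subspace of `F_q^{n+1}`. The set `C` of
all flags of type `J` whose `m`-dimensional member contains `P` is an EKR-set of flags of
type `J` attaining the upper bound: `|C| · (1 + q^m) = v`, with `v` the total number of
flags of type `J`. -/
theorem EKR_flags_point_pencil_sharp (m : ℕ) (hm : 2 ≤ m) (n : ℕ) (hn : n = 2 * m - 1)
    (F : Type) [Field F] [Fintype F] (q : ℕ) (hq : q = Fintype.card F)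
    (J : Finset ℕ) (hJsub : J ⊆ Finset.Icc 1 n)
    (hJself : ∀ k, k ∈ J ↔ n + 1 - k ∈ J) (hmJ : m ∈ J)
    (P : Submodule F (Fin (n + 1) → F)) (hP : Module.finrank F P = 1)
    (C : Set (FlagOfType F n J))
    (hC : C = {Fl : FlagOfType F n J | P ≤ Fl.U ⟨m, hmJ⟩}) :
    (∀ F1 ∈ C, ∀ F2 ∈ C, ¬ F1.Opposite F2) ∧
      Nat.card C * (1 + q ^ m) = Nat.card (FlagOfType F n J) := by
  classical
  subst hC
  obtain ⟨p, hp0, hpP⟩ := finrank_eq_one_iff'.1 hP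
  have hp0' : (p : Fin (n + 1) → F) ≠ 0 := by simpa using hp0
  have hPle : ∀ W : Submodule F (Fin (n + 1) → F), P ≤ W ↔ (p : Fin (n + 1) → F) ∈ W := by
    intro W
    refine ⟨fun h => h p.2, fun h x hx => ?_⟩
    obtain ⟨c, hc⟩ := hpP ⟨x, hx⟩
    have : x = c • (p : Fin (n + 1) → F) := by rw [← Submodule.coe_smul, hc]
    rw [this]
    exact W.smul_mem c h
  refine ⟨?_, ?_⟩
  · intro F1 h1 F2 h2 hop
    have h := hop ⟨m, hmJ⟩ ⟨m, hmJ⟩ (by simp only; omega)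
    have : (p : Fin (n + 1) → F) ∈ F1.U ⟨m, hmJ⟩ ⊓ F2.U ⟨m, hmJ⟩ :=
      ⟨h1 p.2, h2 p.2⟩
    rw [h] at this
    exact hp0' (by simpa using this)
  · have hfin := FlagOfType.finite' (F := F) (n := n) (J := J)
    have := Fintype.ofFinite (FlagOfType F n J)
    have hCc : Nat.card {Fl : FlagOfType F n J | P ≤ Fl.U ⟨m, hmJ⟩} =
        Nat.card {A : FlagOfType F n J // (p : Fin (n + 1) → F) ∈ A.U ⟨m, hmJ⟩} :=
      Nat.card_congr (Equiv.subtypeEquivRight fun A => hPle _)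
    have key := Finset.card_mul_eq_card_mul
      (s := (Finset.univ : Finset (Fin (n + 1) → F)).erase 0)
      (t := (Finset.univ : Finset (FlagOfType F n J)))
      (fun v A => v ∈ A.U ⟨m, hmJ⟩)
      (m := Nat.card {Fl : FlagOfType F n J | P ≤ Fl.U ⟨m, hmJ⟩})
      (n := q ^ m - 1)
      (by
        intro v hv
        have hv0 : v ≠ 0 := by simpa using hv
        rw [hCc, Finset.bipartiteAbove, ← Fintype.card_subtype, ← Nat.card_eq_fintype_card]
        exact le_antisymm (FlagOfType.card_le _ _ _ hv0 hp0')
          (FlagOfType.card_le _ _ _ hp0' hv0))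
      (by
        intro A _
        have e : (((Finset.univ : Finset (Fin (n + 1) → F)).erase 0).bipartiteBelow
            (fun v A => v ∈ A.U ⟨m, hmJ⟩) A) =
            (Finset.univ.filter (fun v => v ∈ A.U ⟨m, hmJ⟩)).erase 0 := by
          ext v
          simp [Finset.bipartiteBelow]
        rw [e, Finset.card_erase_of_mem (by simp), ← Fintype.card_subtype]
        have h2 := Module.card_eq_pow_finrank (K := F) (V := A.U ⟨m, hmJ⟩)
        rw [A.dim] at h2
        rw [hq, ← h2])
    rw [Finset.card_erase_of_mem (Finset.mem_univ _), Finset.card_univ, Finset.card_univ,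
      ← Nat.card_eq_fintype_card (α := FlagOfType F n J), Fintype.card_fun, Fintype.card_fin,
      ← hq] at key
    have hq2 : 2 ≤ q := by rw [hq]; exact Fintype.one_lt_card
    have hqm : 2 ≤ q ^ m := le_trans hq2 (Nat.le_self_pow (by omega) q)
    have hn1 : n + 1 = m + m := by omega
    obtain ⟨r, hr⟩ : ∃ r, q ^ m = r + 1 := ⟨q ^ m - 1, by omega⟩
    have hsq : q ^ (n + 1) - 1 = r * (r + 2) := by
      rw [hn1, pow_add, hr]
      have : (r + 1) * (r + 1) = r * (r + 2) + 1 := by ring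
      omega
    rw [hsq, hr, Nat.add_sub_cancel] at key
    rw [hr]
    have hr0 : 0 < r := by omega
    apply Nat.eq_of_mul_eq_mul_right hr0
    rw [← key]
    ring
end

section
/- Let n ≥ 1 and q a prime power, and let A be the adjacency matrix of the opposition graph on complete flags of V = F_q^{n+1}. Then every real eigenvalue λ of A satisfies λ ≥ −(√q)^{n²−1}, and −(√q)^{n²−1} is an eigenvalue of A; i.e., the smallest eigenvalue of A equals −q^{(n²−1)/2}. -/
section OppositionProof

open Module

/-! ### Operators attached to relations -/

open scoped Classical in
/-- The operator `f ↦ (x ↦ ∑_{y, R x y} f y)` attached to a relation. -/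
noncomputable def relOp {α : Type} [Fintype α] (R : α → α → Prop) : Module.End ℝ (α → ℝ) where
  toFun f := fun x => ∑ y, if R x y then f y else 0
  map_add' f g := by
    funext x
    simp only [Pi.add_apply, ← Finset.sum_add_distrib]
    refine Finset.sum_congr rfl fun y _ => ?_
    split_ifs <;> simp
  map_smul' c f := by
    funext x
    simp only [Pi.smul_apply, smul_eq_mul, RingHom.id_apply, Finset.mul_sum]
    refine Finset.sum_congr rfl fun y _ => ?_
    split_ifs <;> simp

open scoped Classical in
theorem relOp_apply {α : Type} [Fintype α] (R : α → α → Prop) (f : α → ℝ) (x : α) :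
    relOp R f x = ∑ y, if R x y then f y else 0 := rfl

open scoped Classical in
theorem relOp_mul {α : Type} [Fintype α] (R S Q : α → α → Prop) (c : ℕ)
    (h1 : ∀ x y z, R x y → S y z → Q x z)
    (h2 : ∀ x z, Q x z → (Finset.univ.filter (fun y => R x y ∧ S y z)).card = c) :
    relOp R * relOp S = (c : ℝ) • relOp Q := by
  refine LinearMap.ext fun f => funext fun x => ?_
  rw [Module.End.mul_apply, relOp_apply, LinearMap.smul_apply, Pi.smul_apply, relOp_apply,
    smul_eq_mul, Finset.mul_sum]
  have : ∀ y, (if R x y then relOp S f y else 0)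
      = ∑ z, if R x y ∧ S y z then f z else 0 := by
    intro y
    split_ifs with h
    · rw [relOp_apply]; simp [h]
    · simp [h]
  rw [Finset.sum_congr rfl fun y _ => this y, Finset.sum_comm]
  refine Finset.sum_congr rfl fun z _ => ?_
  rw [← Finset.sum_filter, Finset.sum_const, nsmul_eq_mul]
  split_ifs with h
  · rw [h2 x z h]
  · have : Finset.univ.filter (fun y => R x y ∧ S y z) = ∅ := by
      ext y; simp only [Finset.mem_filter, Finset.mem_univ, true_and]
      constructor
      · rintro ⟨a, b⟩; exact absurd (h1 _ _ _ a b) h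
      · simp
    rw [this]; simp

theorem relOp_mul_one {α : Type} [Fintype α] (R S Q : α → α → Prop)
    (h1 : ∀ x y z, R x y → S y z → Q x z)
    (h2 : ∀ x z, Q x z → ∃ y, R x y ∧ S y z)
    (h3 : ∀ x z y y', R x y → S y z → R x y' → S y' z → y = y') :
    relOp R * relOp S = relOp Q := by
  classical
  rw [relOp_mul R S Q 1 h1, Nat.cast_one, one_smul]
  intro x z h
  obtain ⟨y, hy⟩ := h2 x z h
  rw [Finset.card_eq_one]
  refine ⟨y, ?_⟩
  ext y'
  simp only [Finset.mem_filter, Finset.mem_univ, true_and, Finset.mem_singleton]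
  constructor
  · rintro ⟨a, b⟩; exact h3 _ _ _ _ a b hy.1 hy.2
  · rintro rfl; exact hy

theorem relOp_eq {α : Type} [Fintype α] : relOp (fun x y : α => x = y) = 1 := by
  classical
  refine LinearMap.ext fun f => funext fun x => ?_
  rw [relOp_apply]; simp

/-! ### Flags indexed by natural numbers -/

namespace CompleteFlag

variable {F : Type} [Field F] {n : ℕ}

/-- The `i`-dimensional member of a flag, with `0` and `V` added. -/
def sub (C : CompleteFlag F n) (i : ℕ) : Submodule F (Fin (n + 1) → F) :=
  if i = 0 then ⊥ else if h : i - 1 < n then C.U ⟨i - 1, h⟩ else ⊤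

theorem sub_zero (C : CompleteFlag F n) : C.sub 0 = ⊥ := by simp [sub]

theorem sub_gt (C : CompleteFlag F n) {i : ℕ} (h : n < i) : C.sub i = ⊤ := by
  have h1 : i ≠ 0 := by omega
  have h2 : ¬ (i - 1 < n) := by omega
  simp [sub, h1, h2]

theorem sub_succ (C : CompleteFlag F n) (i : Fin n) : C.sub (i + 1) = C.U i := by
  simp [sub]

theorem finrank_sub (C : CompleteFlag F n) {i : ℕ} (h : i ≤ n + 1) : finrank F (C.sub i) = i := by
  rcases Nat.eq_zero_or_pos i with rfl | h0
  · rw [sub_zero]; simp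
  · rcases Nat.lt_or_ge n i with h1 | h1
    · rw [sub_gt C h1, finrank_top]; simp; omega
    · obtain ⟨j, rfl⟩ : ∃ j, i = j + 1 := ⟨i - 1, by omega⟩
      rw [C.sub_succ ⟨j, by omega⟩, C.dim]

theorem sub_mono (C : CompleteFlag F n) {i j : ℕ} (h : i ≤ j) : C.sub i ≤ C.sub j := by
  rcases Nat.eq_zero_or_pos i with rfl | h0
  · rw [sub_zero]; exact bot_le
  · rcases Nat.lt_or_ge n j with h1 | h1
    · rw [sub_gt C h1]; exact le_top
    · obtain ⟨i, rfl⟩ : ∃ k, i = k + 1 := ⟨i - 1, by omega⟩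
      obtain ⟨j, rfl⟩ : ∃ k, j = k + 1 := ⟨j - 1, by omega⟩
      rw [C.sub_succ ⟨i, by omega⟩, C.sub_succ ⟨j, by omega⟩]
      exact C.mono (by simpa using h)

theorem ext_sub {C D : CompleteFlag F n} (h : ∀ i, 1 ≤ i → i ≤ n → C.sub i = D.sub i) : C = D := by
  obtain ⟨U, hU, mU⟩ := C
  obtain ⟨W, hW, mW⟩ := D
  have : U = W := by
    funext i
    have := h (i + 1) (by omega) (by omega)
    rwa [sub_succ, sub_succ] at this
  subst this; rfl

theorem opposite_iff_s10 (C D : CompleteFlag F n) :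
    C.Opposite D ↔ ∀ i, 1 ≤ i → i ≤ n → C.sub i ⊓ D.sub (n + 1 - i) = ⊥ := by
  constructor
  · intro h i h1 h2
    have := h ⟨i - 1, by omega⟩
    rw [← sub_succ, ← sub_succ, Fin.val_rev] at this
    have e1 : i - 1 + 1 = i := by omega
    have e2 : n - i + 1 = n + 1 - i := by omega
    simpa only [e1, e2] using this
  · intro h i
    have := h (i + 1) (by omega) (by omega)
    rw [← sub_succ, ← sub_succ, Fin.val_rev]
    have e2 : n - (i + 1) + 1 = n + 1 - (i + 1) := by omega
    rwa [e2]

/-- Build a flag from a family of subspaces indexed by natural numbers. -/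
theorem exists_of (S : ℕ → Submodule F (Fin (n + 1) → F))
    (hd : ∀ i, 1 ≤ i → i ≤ n → finrank F (S i) = i)
    (hm : ∀ i, 1 ≤ i → i < n → S i ≤ S (i + 1)) :
    ∃ C : CompleteFlag F n, ∀ i, 1 ≤ i → i ≤ n → C.sub i = S i := by
  have mono : ∀ i j, 1 ≤ i → i ≤ j → j ≤ n → S i ≤ S j := by
    intro i j h1 h2
    induction j, h2 using Nat.le_induction with
    | base => intro _; exact le_rfl
    | succ j hj ih => intro h; exact (ih (by omega)).trans (hm j (by omega) (by omega))
  refine ⟨⟨fun i => S (i + 1), fun i => hd _ (by omega) (by omega), fun i j h => ?_⟩, ?_⟩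
  · exact mono _ _ (by omega) (by simpa using h) (by omega)
  · intro i h1 h2
    obtain ⟨i, rfl⟩ : ∃ k, i = k + 1 := ⟨i - 1, by omega⟩
    rw [sub_succ _ ⟨i, by omega⟩]

/-- Replace the `i`-dimensional member of a flag. -/
theorem exists_upd (C : CompleteFlag F n) (i : ℕ) (h1 : 1 ≤ i) (h2 : i ≤ n)
    (X : Submodule F (Fin (n + 1) → F)) (hX : finrank F X = i)
    (hl : C.sub (i - 1) ≤ X) (hu : X ≤ C.sub (i + 1)) :
    ∃ D : CompleteFlag F n, D.sub i = X ∧ ∀ j, j ≠ i → C.sub j = D.sub j := by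
  obtain ⟨D, hD⟩ := exists_of (n := n) (fun j => if j = i then X else C.sub j) (by
    intro j a b
    by_cases h : j = i
    · rw [if_pos h, hX, h]
    · rw [if_neg h]; exact C.finrank_sub (by omega)) (by
    intro j a b
    split_ifs with h h' h'
    · exact le_rfl
    · subst h; exact hu
    · have : j = i - 1 := by omega
      subst this; exact hl
    · exact C.sub_mono (by omega))
  refine ⟨D, ?_, fun j hj => ?_⟩
  · rw [hD i h1 h2]; simp
  · rcases Nat.eq_zero_or_pos j with rfl | h0
    · rw [sub_zero, sub_zero]
    · rcases Nat.lt_or_ge n j with h3 | h3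
      · rw [sub_gt _ h3, sub_gt _ h3]
      · rw [hD j h0 h3]; simp [hj]

theorem eq_of_le_sub (C : CompleteFlag F n) {i : ℕ} (hi : i ≤ n + 1)
    {X : Submodule F (Fin (n + 1) → F)} (hX : finrank F X = i) (h : X ≤ C.sub i) : X = C.sub i :=
  Submodule.eq_of_le_of_finrank_eq h (by rw [hX, C.finrank_sub hi])

theorem exists_flag : Nonempty (CompleteFlag F n) := by
  let b := Pi.basisFun F (Fin (n + 1))
  obtain ⟨C, -⟩ := exists_of (n := n)
    (fun i => Submodule.span F (Set.range (fun j : {j : Fin (n + 1) // (j : ℕ) < i} => b j.1)))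
    (by
      intro i h1 h2
      have := finrank_span_eq_card (R := F)
        (b := fun j : {j : Fin (n + 1) // (j : ℕ) < i} => b j.1)
        (b.linearIndependent.comp _ Subtype.val_injective)
      rw [this, Fintype.card_subtype]
      have : (Finset.univ.filter fun x : Fin (n + 1) => (x : ℕ) < i) = Finset.Iio ⟨i, by omega⟩ := by
        ext x; simp [Fin.lt_def]
      rw [this, Fin.card_Iio])
    (by
      intro i h1 h2
      apply Submodule.span_mono
      rintro _ ⟨⟨j, hj⟩, rfl⟩
      exact ⟨⟨j, by omega⟩, rfl⟩)
  exact ⟨C⟩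

/-- If `W_k ⊄ H`, `W_{k-1} ⊂ H` with `H` a hyperplane of `W_{m+1}`, the flag `W` can be
pushed into `H`. -/
theorem exists_push (W : CompleteFlag F n) (m k : ℕ) (hk1 : 1 ≤ k) (hkm : k ≤ m) (hm : m ≤ n)
    (H : Submodule F (Fin (n + 1) → F)) (hH : finrank F H = m) (hHW : H ≤ W.sub (m + 1))
    (h1 : W.sub (k - 1) ≤ H) (h2 : ¬ W.sub k ≤ H) :
    ∃ C : CompleteFlag F n, (∀ i, i < k → C.sub i = W.sub i) ∧
      (∀ i, k ≤ i → i ≤ m → C.sub i = W.sub (i + 1) ⊓ H) ∧ (∀ i, m < i → C.sub i = W.sub i) := by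
  have key : ∀ i, k ≤ i → i ≤ m → finrank F ↥(W.sub (i + 1) ⊓ H) = i := by
    intro i a b
    have e := Submodule.finrank_sup_add_finrank_inf_eq (W.sub (i + 1)) H
    have hne : W.sub (i + 1) ⊔ H = W.sub (m + 1) := by
      apply W.eq_of_le_sub (by omega) _ (sup_le (W.sub_mono (by omega)) hHW)
      apply le_antisymm
      · rw [← W.finrank_sub (i := m + 1) (by omega)]
        exact Submodule.finrank_mono (sup_le (W.sub_mono (by omega)) hHW)
      · have : H < W.sub (i + 1) ⊔ H := by
          rw [right_lt_sup]
          exact fun h => h2 ((W.sub_mono (by omega)).trans h)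
        have := Submodule.finrank_lt_finrank_of_lt this
        omega
    rw [hne, W.finrank_sub (by omega), W.finrank_sub (by omega), hH] at e
    omega
  obtain ⟨C, hC⟩ := exists_of (n := n)
    (fun i => if i < k then W.sub i else if i ≤ m then W.sub (i + 1) ⊓ H else W.sub i) (by
      intro i a b
      by_cases c : i < k
      · rw [if_pos c]; exact W.finrank_sub (by omega)
      · rw [if_neg c]
        by_cases d : i ≤ m
        · rw [if_pos d]; exact key i (by omega) d
        · rw [if_neg d]; exact W.finrank_sub (by omega)) (by
      intro i a b
      split_ifs with c d e e
      · exact W.sub_mono (by omega)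
      · have : i = k - 1 := by omega
        exact le_inf (W.sub_mono (by omega)) (this ▸ h1)
      · omega
      · omega
      · exact inf_le_inf_right _ (W.sub_mono (by omega))
      · exact inf_le_left
      · omega
      · omega
      · exact W.sub_mono (by omega))
  have hC' : ∀ i, i ≤ n → C.sub i =
      if i < k then W.sub i else if i ≤ m then W.sub (i + 1) ⊓ H else W.sub i := by
    intro i hi
    rcases Nat.eq_zero_or_pos i with rfl | h0
    · rw [if_pos (by omega), sub_zero, sub_zero]
    · exact hC i h0 hi
  refine ⟨C, fun i hi => ?_, fun i a b => ?_, fun i hi => ?_⟩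
  · rw [hC' i (by omega), if_pos hi]
  · rw [hC' i (by omega), if_neg (by omega), if_pos b]
  · rcases Nat.lt_or_ge n i with h3 | h3
    · rw [sub_gt _ h3, sub_gt _ h3]
    · rw [hC' i h3, if_neg (by omega), if_neg (by omega)]


/-! ### Panels -/

/-- Two flags agree outside dimension `i`. -/
def Same (i : ℕ) (C D : CompleteFlag F n) : Prop := ∀ j, j ≠ i → C.sub j = D.sub j

/-- Two distinct flags agree outside dimension `i`. -/
def Adja (i : ℕ) (C D : CompleteFlag F n) : Prop := C ≠ D ∧ Same i C D

theorem Same.symm {i : ℕ} {C D : CompleteFlag F n} (h : Same i C D) : Same i D C :=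
  fun j hj => (h j hj).symm

theorem Same.trans {i : ℕ} {C D E : CompleteFlag F n} (h : Same i C D) (h' : Same i D E) :
    Same i C E :=
  fun j hj => (h j hj).trans (h' j hj)

theorem Same.eq {i : ℕ} {C D : CompleteFlag F n} (h : Same i C D) (e : C.sub i = D.sub i) :
    C = D := by
  apply ext_sub
  intro j _ _
  by_cases hj : j = i
  · rw [hj, e]
  · exact h j hj

theorem card_panel_aux [Fintype F] (C : CompleteFlag F n) (i : ℕ) (h1 : 1 ≤ i)
    (h2 : i ≤ n) : Nat.card {D : CompleteFlag F n // Same i C D} = Fintype.card F + 1 := by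
  obtain ⟨L', hL'⟩ := Submodule.exists_isCompl (C.sub (i - 1))
  set A := C.sub (i - 1) with hA
  set B := C.sub (i + 1) with hB
  have hAB : A ≤ B := C.sub_mono (by omega)
  have hfA : finrank F A = i - 1 := C.finrank_sub (by omega)
  have hfB : finrank F B = i + 1 := C.finrank_sub (by omega)
  set L := L' ⊓ B with hL
  have hsup : A ⊔ L = B := by
    rw [hL, ← sup_inf_assoc_of_le _ hAB, hL'.sup_eq_top, top_inf_eq]
  have hinf : A ⊓ L = ⊥ := by
    rw [hL, ← inf_assoc, hL'.inf_eq_bot, bot_inf_eq]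
  have hLB : L ≤ B := inf_le_right
  have hfL : finrank F L = 2 := by
    have := Submodule.finrank_sup_add_finrank_inf_eq A L
    rw [hsup, hinf, finrank_bot] at this
    omega
  have hX : ∀ H : {H : Submodule F L // finrank F H = 1}, ∃ D : CompleteFlag F n,
      D.sub i = A ⊔ H.1.map L.subtype ∧ ∀ j, j ≠ i → C.sub j = D.sub j := by
    intro H
    have hle : H.1.map L.subtype ≤ L := Submodule.map_subtype_le _ _
    apply C.exists_upd i h1 h2 _ _ le_sup_left (sup_le hAB (hle.trans hLB))
    have := Submodule.finrank_sup_add_finrank_inf_eq A (H.1.map L.subtype)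
    have e : A ⊓ H.1.map L.subtype = ⊥ := by
      rw [eq_bot_iff, ← hinf]; exact inf_le_inf_left _ hle
    rw [e, finrank_bot, (Submodule.finrank_map_subtype_eq L H.1), H.2, hfA] at this
    have h3 : i - 1 + 1 = i := by omega
    rw [add_zero, h3] at this
    exact this
  choose g hg1 hg2 using hX
  rw [← Nat.card_eq_fintype_card, ← Projectivization.card_of_finrank_two F L hfL,
    Nat.card_congr (Projectivization.equivSubmodule F L)]
  symm
  refine Nat.card_congr (Equiv.ofBijective (fun H => ⟨g H, hg2 H⟩) ⟨?_, ?_⟩)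
  · intro H H' hh
    have hh1 : g H = g H' := congrArg Subtype.val hh
    have key : ∀ H : {H : Submodule F L // finrank F H = 1},
        (g H).sub i ⊓ L = H.1.map L.subtype := by
      intro H
      have hle : H.1.map L.subtype ≤ L := Submodule.map_subtype_le _ _
      rw [hg1, sup_comm, sup_inf_assoc_of_le _ hle, hinf, sup_bot_eq]
    apply Subtype.ext
    apply Submodule.map_injective_of_injective (Submodule.subtype_injective L)
    rw [← key, ← key, hh1]
  · rintro ⟨D, hD⟩
    have hAD : A ≤ D.sub i := by
      rw [hA, hD (i - 1) (by omega)]; exact D.sub_mono (by omega)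
    have hDB : D.sub i ≤ B := by
      rw [hB, hD (i + 1) (by omega)]; exact D.sub_mono (by omega)
    have hfD : finrank F (D.sub i) = i := D.finrank_sub (by omega)
    have hs : D.sub i ⊔ L = B :=
      le_antisymm (sup_le hDB hLB) (hsup ▸ sup_le_sup_right hAD _)
    have e : ((D.sub i).comap L.subtype).map L.subtype = D.sub i ⊓ L := by
      rw [Submodule.map_comap_subtype, inf_comm]
    refine ⟨⟨(D.sub i).comap L.subtype, ?_⟩, ?_⟩
    · rw [← Submodule.finrank_map_subtype_eq, e]
      have := Submodule.finrank_sup_add_finrank_inf_eq (D.sub i) L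
      rw [hs] at this
      omega
    · apply Subtype.ext
      refine Same.eq (i := i) ((Same.symm (hg2 _)).trans hD) ?_
      rw [hg1]
      dsimp only
      rw [e, inf_comm, ← sup_inf_assoc_of_le _ hAD, hsup, inf_comm]
      exact inf_eq_left.mpr hDB

open scoped Classical in
theorem card_panel_s10 [Fintype F] [Fintype (CompleteFlag F n)] (C : CompleteFlag F n) (i : ℕ)
    (h1 : 1 ≤ i) (h2 : i ≤ n) :
    (Finset.univ.filter (fun D : CompleteFlag F n => Same i C D)).card = Fintype.card F + 1 := by
  rw [← card_panel_aux C i h1 h2, Nat.card_eq_fintype_card, Fintype.card_subtype]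

theorem relOp_same_mul [Fintype F] [Fintype (CompleteFlag F n)] (i : ℕ)
    (h1 : 1 ≤ i) (h2 : i ≤ n) :
    relOp (Same (F := F) (n := n) i) * relOp (Same i)
      = ((Fintype.card F + 1 : ℕ) : ℝ) • relOp (Same i) := by
  classical
  apply relOp_mul
  · intro x y z; exact Same.trans
  · intro x z h
    rw [← card_panel_s10 x i h1 h2]
    congr 1
    ext y
    simp only [Finset.mem_filter, Finset.mem_univ, true_and]
    exact ⟨fun h => h.1, fun hh => ⟨hh, hh.symm.trans h⟩⟩

theorem relOp_same [Fintype (CompleteFlag F n)] (i : ℕ) :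
    relOp (Same (F := F) (n := n) i) = relOp (Adja i) + 1 := by
  classical
  rw [← relOp_eq]
  refine LinearMap.ext fun f => funext fun x => ?_
  rw [LinearMap.add_apply, Pi.add_apply, relOp_apply, relOp_apply, relOp_apply,
    ← Finset.sum_add_distrib]
  refine Finset.sum_congr rfl fun y _ => ?_
  by_cases h : x = y
  · subst h
    have : Same i x x := fun _ _ => rfl
    simp [Adja, this]
  · simp [Adja, h]

/-! ### The opposition operator as a product -/

/-- Relative position `s_m ⋯ s_k`. -/
def Rrel (m k : ℕ) (C D : CompleteFlag F n) : Prop :=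
  (∀ i, i < k ∨ m < i → C.sub i = D.sub i) ∧
  (∀ i, k ≤ i → i < m → C.sub i ≤ D.sub (i + 1)) ∧ (k ≤ m → ¬ D.sub k ≤ C.sub m)

/-- Relative position opposite in dimension at most `m`. -/
def Arel (m : ℕ) (C D : CompleteFlag F n) : Prop :=
  (∀ i, m < i → C.sub i = D.sub i) ∧
  (∀ i, 1 ≤ i → i ≤ m → C.sub i ⊓ D.sub (m + 1 - i) = ⊥)

theorem Rrel.step {m k : ℕ} (hk : 1 ≤ k) (hkm : k ≤ m) (hm : m ≤ n) {C D : CompleteFlag F n}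
    (h : Rrel m k C D) : ∃ E, Rrel m (k + 1) C E ∧ Adja k E D := by
  obtain ⟨ha, hb, hc⟩ := h
  have hc := hc hkm
  obtain ⟨E, hE1, hE2⟩ := D.exists_upd k hk (by omega) (C.sub k) (C.finrank_sub (by omega))
    (by rw [← ha (k - 1) (by omega)]; exact C.sub_mono (by omega))
    (by
      rcases Nat.lt_or_ge k m with h | h
      · exact hb k le_rfl h
      · rw [← ha (k + 1) (by omega)]; exact C.sub_mono (by omega))
  refine ⟨E, ⟨?_, ?_, ?_⟩, ?_, ?_⟩
  · intro i hi
    by_cases e : i = k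
    · rw [e, hE1]
    · rw [← hE2 i e]; exact ha i (by omega)
  · intro i h1 h2
    rw [← hE2 _ (by omega)]
    exact hb i (by omega) h2
  · intro _ h
    rw [← hE2 _ (by omega)] at h
    exact hc ((D.sub_mono (by omega)).trans h)
  · rintro rfl
    apply hc
    rw [hE1]
    exact C.sub_mono hkm
  · exact Same.symm hE2

theorem relOp_Rrel [Fintype (CompleteFlag F n)] {m k : ℕ} (hk : 1 ≤ k) (hkm : k ≤ m) (hm : m ≤ n) :
    relOp (Rrel (F := F) (n := n) m (k + 1)) * relOp (Adja k) = relOp (Rrel m k) := by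
  apply relOp_mul_one
  · rintro C E D ⟨ha, hb, hc⟩ ⟨hne, hs⟩
    refine ⟨?_, ?_, ?_⟩
    · intro i hi
      rw [ha i (by omega), hs i (by omega)]
    · intro i h1 h2
      by_cases e : i = k
      · subst e
        rw [ha i (by omega), ← hs (i + 1) (by omega)]; exact E.sub_mono (by omega)
      · rw [← hs (i + 1) (by omega)]; exact hb i (by omega) h2
    · intro _ hle
      have hCE : E.sub k ≤ C.sub m := by rw [← ha k (by omega)]; exact C.sub_mono hkm
      have hne' : ¬ D.sub k ≤ E.sub k := by
        intro h
        exact hne (hs.eq (E.eq_of_le_sub (by omega) (D.finrank_sub (by omega)) h).symm)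
      rcases Nat.lt_or_ge k m with h | h
      · apply hc h
        have : E.sub k ⊔ D.sub k = E.sub (k + 1) := by
          have hle' : E.sub k ⊔ D.sub k ≤ E.sub (k + 1) :=
            sup_le (E.sub_mono (by omega))
              (by rw [hs (k + 1) (by omega)]; exact D.sub_mono (by omega))
          apply E.eq_of_le_sub (by omega) _ hle'
          have h1 := Submodule.finrank_lt_finrank_of_lt (left_lt_sup.mpr hne')
          have h2 := Submodule.finrank_mono hle'
          rw [E.finrank_sub (by omega)] at h1 h2
          omega
        rw [← this]
        exact sup_le hCE hle
      · have : m = k := by omega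
        subst this
        apply hne'
        rw [← ha m (by omega)]
        exact hle
  · intro C D h; exact h.step hk hkm hm
  · rintro C D E E' ⟨ha, -, -⟩ ⟨-, hs⟩ ⟨ha', -, -⟩ ⟨-, hs'⟩
    refine (hs.trans hs'.symm).eq ?_
    rw [← ha k (by omega), ← ha' k (by omega)]

theorem inf_eq_bot_of_not_le (C : CompleteFlag F n) (hn : 1 ≤ n)
    {X : Submodule F (Fin (n + 1) → F)} :
    X ⊓ C.sub 1 = ⊥ ↔ ¬ C.sub 1 ≤ X := by
  have hf : finrank F (C.sub 1) = 1 := C.finrank_sub (by omega)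
  constructor
  · intro h hle
    rw [inf_eq_right.mpr hle] at h
    rw [h, finrank_bot] at hf
    omega
  · intro h
    have : X ⊓ C.sub 1 < C.sub 1 := inf_lt_right.mpr h
    have := Submodule.finrank_lt_finrank_of_lt this
    rw [hf] at this
    exact Submodule.finrank_eq_zero.mp (by omega)

theorem Rrel.eq_inf {m : ℕ} (hm : m + 1 ≤ n) {E D : CompleteFlag F n}
    (h : Rrel (m + 1) 1 E D) {j : ℕ} (h1 : 1 ≤ j) (h2 : j ≤ m) :
    E.sub j = D.sub (j + 1) ⊓ E.sub (m + 1) := by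
  obtain ⟨ha, hb, hc⟩ := h
  apply Submodule.eq_of_le_of_finrank_le
  · exact le_inf (hb j h1 (by omega)) (E.sub_mono (by omega))
  · have : D.sub (j + 1) ⊓ E.sub (m + 1) < D.sub (j + 1) := by
      rw [inf_lt_left]
      exact fun h => hc (by omega) ((D.sub_mono (by omega)).trans h)
    have := Submodule.finrank_lt_finrank_of_lt this
    rw [D.finrank_sub (by omega)] at this
    rw [E.finrank_sub (by omega)]
    omega

theorem relOp_Arel [Fintype (CompleteFlag F n)] {m : ℕ} (hm : m + 1 ≤ n) :
    relOp (Arel (F := F) (n := n) m) * relOp (Rrel (m + 1) 1) = relOp (Arel (m + 1)) := by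
  apply relOp_mul_one
  · rintro C E D ⟨ha, hb⟩ hR
    refine ⟨?_, ?_⟩
    · intro i hi
      rw [ha i (by omega), hR.1 i (by omega)]
    · intro i h1 h2
      rcases Nat.lt_or_ge i (m + 1) with h | h
      · have e := hR.eq_inf hm (j := m + 1 - i) (by omega) (by omega)
        have e' : m + 1 - i + 1 = m + 1 + 1 - i := by omega
        rw [e', ← ha (m + 1) (by omega)] at e
        have := hb i h1 (by omega)
        rw [e, ← inf_assoc] at this
        rw [eq_bot_iff, ← this]
        exact le_inf le_rfl (inf_le_left.trans (C.sub_mono (by omega)))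
      · have : i = m + 1 := by omega
        subst this
        have e' : m + 1 + 1 - (m + 1) = 1 := by omega
        rw [e', D.inf_eq_bot_of_not_le (by omega), ha _ (by omega)]
        exact hR.2.2 (by omega)
  · rintro C D ⟨ha, hb⟩
    have hnot : ¬ D.sub 1 ≤ C.sub (m + 1) := by
      rw [← D.inf_eq_bot_of_not_le (by omega)]
      have := hb (m + 1) (by omega) le_rfl
      have e' : m + 1 + 1 - (m + 1) = 1 := by omega
      rwa [e'] at this
    obtain ⟨E, hE1, hE2, hE3⟩ := D.exists_push (m + 1) 1 le_rfl (by omega) hm (C.sub (m + 1))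
      (C.finrank_sub (by omega))
      (by rw [← ha (m + 1 + 1) (by omega)]; exact C.sub_mono (by omega))
      (by simp [sub_zero]) hnot
    have hEm : E.sub (m + 1) = C.sub (m + 1) := by
      rw [hE2 (m + 1) (by omega) le_rfl, ← ha (m + 1 + 1) (by omega)]
      exact inf_eq_right.mpr (C.sub_mono (by omega))
    refine ⟨E, ⟨?_, ?_⟩, ?_, ?_, ?_⟩
    · intro i hi
      by_cases e : i = m + 1
      · rw [e, hEm]
      · rw [ha i (by omega), hE3 i (by omega)]
    · intro i h1 h2
      rw [hE2 _ (by omega) (by omega), eq_bot_iff, ← hb i h1 (by omega)]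
      have e' : m + 1 - i + 1 = m + 1 + 1 - i := by omega
      rw [e']
      exact inf_le_inf_left _ inf_le_left
    · intro i hi
      by_cases e : i = 0
      · rw [e, sub_zero, sub_zero]
      · exact hE3 i (by omega)
    · intro i h1 h2
      rw [hE2 i h1 (by omega)]; exact inf_le_left
    · intro _
      rwa [hEm]
  · rintro C D E E' ⟨ha, -⟩ hR ⟨ha', -⟩ hR'
    apply ext_sub
    intro i h1 h2
    rcases Nat.lt_or_ge m i with h | h
    · rw [← ha i h, ← ha' i h]
    · rw [hR.eq_inf hm h1 h, hR'.eq_inf hm h1 h, ← ha _ (by omega), ← ha' _ (by omega)]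

end CompleteFlag

/-- `t_m ⋯ t_1` -/
def cprod {M : Type} [Monoid M] (t : ℕ → M) : ℕ → M
  | 0 => 1
  | m + 1 => t (m + 1) * cprod t m

/-- `(t_1)(t_2 t_1) ⋯ (t_m ⋯ t_1)` -/
def dprod {M : Type} [Monoid M] (t : ℕ → M) : ℕ → M
  | 0 => 1
  | m + 1 => dprod t m * cprod t (m + 1)

namespace CompleteFlag

variable {F : Type} [Field F] {n : ℕ}

theorem relOp_Rrel_one [Fintype (CompleteFlag F n)] {m : ℕ} (hm : m ≤ n) :
    cprod (fun i => relOp (Adja (F := F) (n := n) i)) m = relOp (Rrel m 1) := by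
  have key : ∀ j, j ≤ m → relOp (Rrel (F := F) (n := n) m (j + 1)) *
      cprod (fun i => relOp (Adja (F := F) (n := n) i)) j = relOp (Rrel m 1) := by
    intro j
    induction j with
    | zero => intro _; simp [cprod]
    | succ j ih =>
      intro hj
      rw [cprod, ← mul_assoc, relOp_Rrel (by omega) hj hm, ih (by omega)]
  have h := key m le_rfl
  have e : (Rrel (F := F) (n := n) m (m + 1)) = fun x y => x = y := by
    funext C D
    apply propext
    constructor
    · rintro ⟨h, -, -⟩
      exact ext_sub fun i _ _ => h i (by omega)
    · rintro rfl
      exact ⟨fun _ _ => rfl, fun _ _ _ => by omega, fun _ => by omega⟩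
  rwa [e, relOp_eq, one_mul] at h

theorem relOp_Arel_eq [Fintype (CompleteFlag F n)] {m : ℕ} (hm : m ≤ n) :
    dprod (fun i => relOp (Adja (F := F) (n := n) i)) m = relOp (Arel m) := by
  induction m with
  | zero =>
    rw [dprod, ← relOp_eq]
    congr 1
    funext C D
    apply propext
    constructor
    · rintro rfl; exact ⟨fun _ _ => rfl, fun _ _ _ => by omega⟩
    · rintro ⟨h, -⟩; exact ext_sub fun i _ _ => h i (by omega)
  | succ m ih => rw [dprod, ih (by omega), relOp_Rrel_one hm, relOp_Arel hm]

theorem Arel_n (C D : CompleteFlag F n) : Arel n C D ↔ C.Opposite D := by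
  rw [opposite_iff_s10]
  exact ⟨fun h => h.2, fun h => ⟨fun i hi => by rw [sub_gt _ hi, sub_gt _ hi], h⟩⟩

/-! ### Connectedness -/

theorem Rrel.invariant {m k : ℕ} (hk : 1 ≤ k) (hm : m ≤ n) (hkm : k ≤ m + 1)
    {f : CompleteFlag F n → ℝ}
    (hf : ∀ i, 1 ≤ i → i ≤ n → ∀ C D, Same i C D → f C = f D) {C D : CompleteFlag F n}
    (h : Rrel m k C D) : f C = f D := by
  obtain ⟨j, hj⟩ : ∃ j, k + j = m + 1 := ⟨m + 1 - k, by omega⟩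
  induction j generalizing k C D with
  | zero =>
    have : C = D := ext_sub fun i _ _ => h.1 i (by omega)
    rw [this]
  | succ j ih =>
    obtain ⟨E, h1, h2⟩ := h.step hk (by omega) hm
    rw [ih (k := k + 1) (by omega) (by omega) h1 (by omega)]
    exact hf k hk (by omega) _ _ h2.2

theorem constant_of_invariant {f : CompleteFlag F n → ℝ}
    (hf : ∀ i, 1 ≤ i → i ≤ n → ∀ C D, Same i C D → f C = f D) (C D : CompleteFlag F n) :
    f C = f D := by
  have key : ∀ m, m ≤ n → ∀ C D : CompleteFlag F n, (∀ i, m < i → C.sub i = D.sub i) →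
      f C = f D := by
    intro m
    induction m with
    | zero =>
      intro _ C D h
      have : C = D := ext_sub fun i _ _ => h i (by omega)
      rw [this]
    | succ m ih =>
      intro hm C D h
      by_cases e : C.sub (m + 1) = D.sub (m + 1)
      · refine ih (by omega) C D fun i hi => ?_
        by_cases hi' : i = m + 1
        · rw [hi', e]
        · exact h i (by omega)
      · have hnot : ¬ C.sub (m + 1) ≤ D.sub (m + 1) := fun hle =>
          e (D.eq_of_le_sub (by omega) (C.finrank_sub (by omega)) hle)
        classical
        have hex : ∃ k, ¬ C.sub k ≤ D.sub (m + 1) := ⟨_, hnot⟩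
        have hk0 : 1 ≤ Nat.find hex := by
          rw [Nat.one_le_iff_ne_zero]
          intro h0
          have := Nat.find_spec hex
          rw [h0, sub_zero] at this
          exact this bot_le
        have hkm : Nat.find hex ≤ m + 1 := Nat.find_min' hex hnot
        have hlt := Nat.find_min hex (m := Nat.find hex - 1) (by omega)
        rw [not_not] at hlt
        obtain ⟨E, h1, h2, h3⟩ := C.exists_push (m + 1) _ hk0 hkm hm (D.sub (m + 1))
          (D.finrank_sub (by omega))
          (by rw [h (m + 1 + 1) (by omega)]; exact D.sub_mono (by omega)) hlt (Nat.find_spec hex)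
        have hEm : E.sub (m + 1) = D.sub (m + 1) := by
          rw [h2 (m + 1) hkm le_rfl, h (m + 1 + 1) (by omega)]
          exact inf_eq_right.mpr (D.sub_mono (by omega))
        have hR : Rrel (m + 1) (Nat.find hex) E C := by
          refine ⟨fun i hi => ?_, fun i a b => ?_, fun _ => ?_⟩
          · rcases hi with hi | hi
            · exact h1 i hi
            · exact h3 i hi
          · rw [h2 i a (by omega)]; exact inf_le_left
          · rw [hEm]; exact Nat.find_spec hex
        rw [← hR.invariant hk0 hm (by omega) hf]
        refine ih (by omega) E D fun i hi => ?_
        by_cases hi' : i = m + 1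
        · rw [hi', hEm]
        · rw [h3 i (by omega), h i (by omega)]
  exact key n le_rfl C D fun i hi => by rw [sub_gt _ hi, sub_gt _ hi]


/-! ### Commutation of the opposition operator with the panel operators -/

/-- Opposition of panels. -/
def Popp (i : ℕ) (C D : CompleteFlag F n) : Prop :=
  ∀ j, 1 ≤ j → j ≤ n → j ≠ n + 1 - i → C.sub j ⊓ D.sub (n + 1 - j) = ⊥

theorem opposite_symm {C D : CompleteFlag F n} (h : C.Opposite D) : D.Opposite C := by
  rw [opposite_iff_s10] at *
  intro i h1 h2
  have := h (n + 1 - i) (by omega) (by omega)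
  have e : n + 1 - (n + 1 - i) = i := by omega
  rwa [e, inf_comm] at this

theorem Popp.symm {i : ℕ} (h1 : 1 ≤ i) (h2 : i ≤ n) {C D : CompleteFlag F n} (h : Popp i C D) :
    Popp (n + 1 - i) D C := by
  intro j a b c
  have := h (n + 1 - j) (by omega) (by omega) (by omega)
  have e : n + 1 - (n + 1 - j) = j := by omega
  rwa [e, inf_comm] at this

theorem Popp.exists_unique {i : ℕ} (h1 : 1 ≤ i) (h2 : i ≤ n) {C D : CompleteFlag F n}
    (h : Popp i C D) :
    ∃ E₀, Same i D E₀ ∧ ∀ E, Same i D E → (C.Opposite E ↔ E ≠ E₀) := by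
  obtain ⟨k, hk⟩ : ∃ k, k = n + 1 - i := ⟨_, rfl⟩
  set Y := C.sub k ⊓ D.sub (i + 1) with hY
  have hlow : C.sub (k - 1) ⊓ D.sub (i + 1) = ⊥ := by
    by_cases e : k - 1 = 0
    · rw [e, sub_zero, bot_inf_eq]
    · have := h (k - 1) (by omega) (by omega) (by omega)
      have e' : n + 1 - (k - 1) = i + 1 := by omega
      rwa [e'] at this
  have hhigh : C.sub (k + 1) ⊓ D.sub (i - 1) = ⊥ := by
    by_cases e : i - 1 = 0
    · rw [e, sub_zero, inf_bot_eq]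
    · have := h (k + 1) (by omega) (by omega) (by omega)
      have e' : n + 1 - (k + 1) = i - 1 := by omega
      rwa [e'] at this
  have hfY : finrank F Y = 1 := by
    have ha := Submodule.finrank_sup_add_finrank_inf_eq (C.sub k) (D.sub (i + 1))
    have hb : finrank F ↥(C.sub k ⊔ D.sub (i + 1)) ≤ n + 1 := by
      simpa using Submodule.finrank_le (C.sub k ⊔ D.sub (i + 1))
    have hc := Submodule.finrank_sup_add_finrank_inf_eq (C.sub (k - 1)) Y
    have hd : C.sub (k - 1) ⊓ Y = ⊥ := by
      rw [eq_bot_iff, ← hlow]; exact inf_le_inf_left _ inf_le_right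
    have he : finrank F ↥(C.sub (k - 1) ⊔ Y) ≤ finrank F (C.sub k) :=
      Submodule.finrank_mono (sup_le (C.sub_mono (by omega)) inf_le_left)
    rw [hd, finrank_bot, C.finrank_sub (by omega)] at hc
    rw [C.finrank_sub (by omega)] at he
    rw [C.finrank_sub (by omega), D.finrank_sub (by omega), ← hY] at ha
    omega
  have hDY : D.sub (i - 1) ⊓ Y = ⊥ := by
    rw [eq_bot_iff, ← hhigh, inf_comm]
    exact inf_le_inf_right _ (inf_le_left.trans (C.sub_mono (by omega)))
  have hfX : finrank F ↥(D.sub (i - 1) ⊔ Y) = i := by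
    have ha := Submodule.finrank_sup_add_finrank_inf_eq (D.sub (i - 1)) Y
    rw [hDY, finrank_bot, D.finrank_sub (by omega), hfY] at ha
    omega
  obtain ⟨E₀, hE1, hE2⟩ := D.exists_upd i h1 h2 _ hfX le_sup_left
    (sup_le (D.sub_mono (by omega)) inf_le_right)
  refine ⟨E₀, hE2, fun E hE => ⟨?_, ?_⟩⟩
  · rintro ho rfl
    rw [opposite_iff_s10] at ho
    have := ho k (by omega) (by omega)
    have e' : n + 1 - k = i := by omega
    rw [e', hE1] at this
    have : Y ≤ ⊥ := by rw [← this]; exact le_inf inf_le_left le_sup_right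
    rw [le_bot_iff.mp this, finrank_bot] at hfY
    omega
  · intro hne
    rw [opposite_iff_s10]
    intro j a b
    by_cases e : j = k
    · subst e
      have e' : n + 1 - j = i := by omega
      rw [e']
      by_contra hcon
      apply hne
      have hle : C.sub j ⊓ E.sub i ≤ Y := by
        apply inf_le_inf_left
        rw [hE (i + 1) (by omega)]; exact E.sub_mono (by omega)
      have heq : C.sub j ⊓ E.sub i = Y := by
        apply Submodule.eq_of_le_of_finrank_le hle
        rw [hfY]
        have : finrank F ↥(C.sub j ⊓ E.sub i) ≠ 0 := by
          rw [Ne, Submodule.finrank_eq_zero]; exact hcon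
        omega
      refine (hE.symm.trans hE2).eq ?_
      rw [hE1]
      symm
      apply E.eq_of_le_sub (by omega) hfX
      apply sup_le
      · rw [hE (i - 1) (by omega)]; exact E.sub_mono (by omega)
      · rw [← heq]; exact inf_le_right
    · rw [← hE (n + 1 - j) (by omega)]
      exact h j a b (by omega)

open scoped Classical in
theorem Popp.card [Fintype F] [Fintype (CompleteFlag F n)] {i : ℕ} (h1 : 1 ≤ i) (h2 : i ≤ n)
    {C D : CompleteFlag F n} (h : Popp i C D) :
    (Finset.univ.filter (fun E : CompleteFlag F n => C.Opposite E ∧ Same i E D)).card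
      = Fintype.card F := by
  obtain ⟨E₀, hE0, hE⟩ := h.exists_unique h1 h2
  have : Finset.univ.filter (fun E : CompleteFlag F n => C.Opposite E ∧ Same i E D)
      = (Finset.univ.filter (fun E : CompleteFlag F n => Same i D E)).erase E₀ := by
    ext E
    simp only [Finset.mem_filter, Finset.mem_univ, true_and, Finset.mem_erase]
    constructor
    · rintro ⟨a, b⟩; exact ⟨(hE E b.symm).mp a, b.symm⟩
    · rintro ⟨a, b⟩; exact ⟨(hE E b).mpr a, b.symm⟩
  rw [this, Finset.card_erase_of_mem (by simpa using hE0), card_panel_s10 D i h1 h2]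
  simp

theorem Popp.of {i : ℕ} (h2 : i ≤ n) {C D E : CompleteFlag F n}
    (h : C.Opposite E) (h' : Same i E D) : Popp i C D := by
  rw [opposite_iff_s10] at h
  intro j a b c
  rw [← h' (n + 1 - j) (by omega)]
  exact h j a b

theorem opp_comm [Fintype F] [Fintype (CompleteFlag F n)] {i : ℕ} (h1 : 1 ≤ i) (h2 : i ≤ n) :
    relOp (Opposite (F := F) (n := n)) * relOp (Same i)
      = relOp (Same (n + 1 - i)) * relOp Opposite := by
  classical
  have e : n + 1 - (n + 1 - i) = i := by omega
  rw [relOp_mul Opposite (Same i) (Popp i) (Fintype.card F) (fun C E D h h' => Popp.of h2 h h')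
      (fun C D h => h.card h1 h2),
    relOp_mul (Same (n + 1 - i)) Opposite (Popp i) (Fintype.card F)]
  · intro C E D a b
    have := (Popp.of (by omega) (opposite_symm b) a.symm).symm (by omega) (by omega)
    rwa [e] at this
  · intro C D h
    rw [← (h.symm h1 h2).card (by omega) (by omega)]
    congr 1
    ext E
    simp only [Finset.mem_filter, Finset.mem_univ, true_and]
    exact ⟨fun ⟨a, b⟩ => ⟨opposite_symm b, a.symm⟩, fun ⟨a, b⟩ => ⟨b.symm, opposite_symm a⟩⟩


end CompleteFlag

/-! ### The determinant argument -/

theorem abs_det_hecke {E : Type} [AddCommGroup E] [Module ℝ E] [FiniteDimensional ℝ E]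
    (q : ℝ) (hq : 0 < q) (t : Module.End ℝ E) (ht : (t + 1) * (t + 1) = (q + 1) • (t + 1)) :
    ∃ a : ℕ, |LinearMap.det t| = q ^ a ∧
      a + finrank ℝ (LinearMap.range (t - q • (1 : Module.End ℝ E))) = finrank ℝ E := by
  have hq1 : q + 1 ≠ 0 := by positivity
  have htt : ∀ x, t (t x) = (q - 1) • t x + q • x := by
    intro x
    have := LinearMap.congr_fun ht x
    simp only [Module.End.mul_apply, LinearMap.add_apply, Module.End.one_apply, map_add,
      LinearMap.smul_apply] at this
    have h2 : t (t x) = (q + 1) • (t x + x) - t x - (t x + x) := by rw [← this]; abel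
    rw [h2]; module
  set r : Module.End ℝ E := -(q + 1)⁻¹ • (t - q • (1 : Module.End ℝ E)) with hr
  have hrx : ∀ x, r x = -(q + 1)⁻¹ • (t x - q • x) := fun x => by simp [hr]
  have hrange : LinearMap.range r = LinearMap.range (t - q • (1 : Module.End ℝ E)) := by
    rw [hr]; exact LinearMap.range_smul _ _ (by simpa using hq1)
  have hid : IsIdempotentElem r := by
    refine LinearMap.ext fun x => ?_
    rw [Module.End.mul_apply, hrx (r x), hrx x, map_smul, map_sub, map_smul, htt]
    match_scalars <;> field_simp <;> ring
  have hproj : LinearMap.IsProj (LinearMap.range r) r := by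
    refine ⟨fun x => ⟨x, rfl⟩, ?_⟩
    rintro _ ⟨x, rfl⟩
    exact LinearMap.congr_fun hid x
  set e := (LinearMap.range r).prodEquivOfIsCompl (LinearMap.ker r) hproj.isCompl with he
  have hconj : t = e.toLinearMap ∘ₗ
      LinearMap.prodMap (-(1 : ℝ) • LinearMap.id) (q • LinearMap.id) ∘ₗ e.symm.toLinearMap := by
    rw [← LinearMap.comp_assoc, LinearEquiv.eq_comp_toLinearMap_symm]
    refine LinearMap.ext ?_
    rintro ⟨⟨y, hy⟩, ⟨z, hz⟩⟩
    have h1 : t y = -y := by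
      have := hproj.map_id y hy
      rw [hrx] at this
      have h2 : t y - q • y = -(q + 1) • y := by
        have h3 : -(q + 1) • (-(q + 1)⁻¹ • (t y - q • y)) = -(q + 1) • y := by rw [this]
        rw [← h3, smul_smul, neg_mul_neg, mul_inv_cancel₀ hq1, one_smul]
      have : t y = -(q + 1) • y + q • y := by rw [← h2]; abel
      rw [this]; module
    have h2 : t z = q • z := by
      rw [LinearMap.mem_ker, hrx, smul_eq_zero] at hz
      rcases hz with h | h
      · exact absurd h (by simpa using hq1)
      · exact sub_eq_zero.mp h
    simp [he, h1, h2]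
  refine ⟨finrank ℝ (LinearMap.ker r), ?_, ?_⟩
  · rw [hconj, LinearMap.det_conj, LinearMap.det_prodMap, LinearMap.det_smul, LinearMap.det_smul,
      LinearMap.det_id, LinearMap.det_id, abs_mul, mul_one, mul_one, abs_pow, abs_pow]
    simp [abs_of_pos hq]
  · rw [← hrange, add_comm]
    exact LinearMap.finrank_range_add_finrank_ker r

theorem map_dprod_eq {M : Type} [Monoid M] (φ : M →* ℝ) (t : ℕ → M) (n : ℕ) :
    φ (dprod t n) = ∏ i ∈ Finset.range n, φ (t (i + 1)) ^ (n - i) := by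
  have hc : ∀ m, φ (cprod t m) = ∏ i ∈ Finset.range m, φ (t (i + 1)) := by
    intro m
    induction m with
    | zero => simp [cprod]
    | succ m ih => rw [cprod, map_mul, ih, Finset.prod_range_succ, mul_comm]
  induction n with
  | zero => simp [dprod]
  | succ n ih =>
    rw [dprod, map_mul, ih, hc, Finset.prod_range_succ, Finset.prod_range_succ, ← mul_assoc,
      ← Finset.prod_mul_distrib]
    congr 1
    · refine Finset.prod_congr rfl fun i hi => ?_
      rw [Finset.mem_range] at hi
      rw [← pow_succ]
      congr 1; omega
    · simp

theorem hecke_bound {E : Type} [AddCommGroup E] [Module ℝ E] [FiniteDimensional ℝ E]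
    [Nontrivial E] (n : ℕ) (hn : 1 ≤ n) (q : ℝ) (hq : 1 ≤ q) (t : ℕ → Module.End ℝ E)
    (ht : ∀ i, 1 ≤ i → i ≤ n → (t i + 1) * (t i + 1) = (q + 1) • (t i + 1))
    (hcomm : ∀ i, 1 ≤ i → i ≤ n → dprod t n * t i = t (n + 1 - i) * dprod t n)
    (lam : ℝ) (hlam : lam ≠ 0)
    (hsq : dprod t n * dprod t n = (lam ^ 2) • (1 : Module.End ℝ E))
    (hinter : ∀ x, (∀ i, 1 ≤ i → i ≤ n → t i x = q • x) → x = 0) :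
    lam ^ 2 ≤ q ^ (n ^ 2 - 1) := by
  have hq0 : 0 < q := by linarith
  set d := finrank ℝ E with hd
  have hdpos : 0 < d := finrank_pos
  have hdet2 : LinearMap.det (dprod t n) * LinearMap.det (dprod t n) = (lam ^ 2) ^ d := by
    rw [← map_mul, hsq, LinearMap.det_smul, map_one, mul_one]
  have hdet0 : LinearMap.det (dprod t n) ≠ 0 := by
    intro h
    rw [h, mul_zero] at hdet2
    exact pow_ne_zero _ (pow_ne_zero _ hlam) hdet2.symm
  have hsymm : ∀ i, 1 ≤ i → i ≤ n → LinearMap.det (t (n + 1 - i)) = LinearMap.det (t i) := by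
    intro i h1 h2
    have := congrArg LinearMap.det (hcomm i h1 h2)
    rw [map_mul, map_mul, mul_comm] at this
    exact (mul_right_cancel₀ hdet0 this).symm
  have hex : ∀ i, ∃ a : ℕ, 1 ≤ i → i ≤ n → (|LinearMap.det (t i)| = q ^ a ∧
      a + finrank ℝ (LinearMap.range (t i - q • (1 : Module.End ℝ E))) = d) := by
    intro i
    by_cases h : 1 ≤ i ∧ i ≤ n
    · obtain ⟨a, ha⟩ := abs_det_hecke q hq0 (t i) (ht i h.1 h.2)
      exact ⟨a, fun _ _ => ha⟩
    · exact ⟨0, fun h1 h2 => absurd ⟨h1, h2⟩ h⟩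
  choose a ha using hex
  -- first expression of the determinant
  have e1 : LinearMap.det (dprod t n)
      = ∏ i ∈ Finset.range n, LinearMap.det (t (i + 1)) ^ (n - i) :=
    map_dprod_eq LinearMap.det t n
  have e2 : LinearMap.det (dprod t n)
      = ∏ i ∈ Finset.range n, LinearMap.det (t (i + 1)) ^ (i + 1) := by
    rw [e1, ← Finset.prod_range_reflect]
    refine Finset.prod_congr rfl fun i hi => ?_
    rw [Finset.mem_range] at hi
    have h1 : n - 1 - i + 1 = n + 1 - (i + 1) := by omega
    have h2 : n - (n - 1 - i) = i + 1 := by omega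
    rw [h1, h2, hsymm (i + 1) (by omega) (by omega)]
  have e3 : (lam ^ 2) ^ d = q ^ ((∑ i ∈ Finset.range n, a (i + 1)) * (n + 1)) := by
    have h : (lam ^ 2) ^ d = |(lam ^ 2) ^ d| := (abs_of_nonneg (by positivity)).symm
    rw [h, ← hdet2]
    nth_rewrite 1 [e1]
    rw [e2, ← Finset.prod_mul_distrib, Finset.abs_prod, pow_mul, ← Finset.prod_pow_eq_pow_sum,
      ← Finset.prod_pow]
    refine Finset.prod_congr rfl fun i hi => ?_
    rw [Finset.mem_range] at hi
    rw [← pow_add, abs_pow, (ha (i + 1) (by omega) (by omega)).1]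
    congr 1; omega
  -- the dimension count
  have hdim : d ≤ ∑ i ∈ Finset.range n,
      finrank ℝ (LinearMap.range (t (i + 1) - q • (1 : Module.End ℝ E))) := by
    let φ : E →ₗ[ℝ] ((i : Fin n) → LinearMap.range (t (i + 1) - q • (1 : Module.End ℝ E))) :=
      LinearMap.pi fun i => (t (i + 1) - q • (1 : Module.End ℝ E)).rangeRestrict
    have hφ : Function.Injective φ := by
      rw [← LinearMap.ker_eq_bot, LinearMap.ker_eq_bot']
      intro x hx
      apply hinter
      intro i h1 h2
      have := congrFun hx ⟨i - 1, by omega⟩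
      have : (t (i - 1 + 1) - q • (1 : Module.End ℝ E)) x = 0 := congrArg Subtype.val this
      have e : i - 1 + 1 = i := by omega
      rw [e] at this
      exact sub_eq_zero.mp this
    have := LinearMap.finrank_le_finrank_of_injective hφ
    rw [Module.finrank_pi_fintype] at this
    rw [Finset.sum_range]
    exact this
  have hsum : ∑ i ∈ Finset.range n, a (i + 1) + d ≤ n * d := by
    have : ∑ i ∈ Finset.range n, (a (i + 1) +
      finrank ℝ (LinearMap.range (t (i + 1) - q • (1 : Module.End ℝ E)))) = n * d := by
      rw [Finset.sum_congr rfl fun i hi => (ha (i + 1) (by omega)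
        (by rw [Finset.mem_range] at hi; omega)).2]
      simp
    rw [Finset.sum_add_distrib] at this
    omega
  have hexp : (∑ i ∈ Finset.range n, a (i + 1)) * (n + 1) ≤ (n ^ 2 - 1) * d := by
    obtain ⟨k, rfl⟩ : ∃ k, n = k + 1 := ⟨n - 1, by omega⟩
    have h1 : (k + 1) ^ 2 - 1 = k * (k + 1 + 1) := by
      have : (k + 1) ^ 2 = k * (k + 1 + 1) + 1 := by ring
      omega
    have h2 : ∑ i ∈ Finset.range (k + 1), a (i + 1) ≤ k * d := by
      rw [add_mul, one_mul] at hsum; omega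
    rw [h1]
    calc _ ≤ (k * d) * (k + 1 + 1) := Nat.mul_le_mul_right _ h2
      _ = _ := by ring
  have hfin : (lam ^ 2) ^ d ≤ (q ^ (n ^ 2 - 1)) ^ d := by
    rw [e3, ← pow_mul]
    exact pow_le_pow_right₀ hq hexp
  exact le_of_pow_le_pow_left₀ (by omega) (by positivity) hfin


/-! ### The reflection representation -/

theorem reflection_eigen {V : Type} [AddCommGroup V] [Module ℝ V] (k : ℕ) (s : ℝ) (hs : s ≠ 0)
    (t : ℕ → Module.End ℝ V) (f : ℕ → V)
    (hoff : ∀ i j, 1 ≤ j → j ≤ k + 1 → i ≠ j → t j (f i) = s ^ 2 • f i)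
    (hdiag : ∀ j, 1 ≤ j → j ≤ k + 1 → t j (f j) = f (j + 1) + s ^ 2 • f (j - 1) - f j)
    (h0 : f 0 = 0) (hn : f (k + 2) = 0) :
    dprod t (k + 1) (s ^ k • f 1 + f (k + 1))
      = -(s ^ (k ^ 2 + 2 * k)) • (s ^ k • f 1 + f (k + 1)) := by
  have hc : ∀ m, m ≤ k + 1 → ∀ i, m < i → cprod t m (f i) = s ^ (2 * m) • f i := by
    intro m
    induction m with
    | zero => intro _ i _; simp [cprod]
    | succ m ih =>
      intro hm i hi
      rw [cprod, Module.End.mul_apply, ih (by omega) i (by omega), map_smul,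
        hoff i (m + 1) (by omega) hm (by omega), smul_smul]
      congr 1; ring
  have hd : ∀ m, m ≤ k + 1 → ∀ i, m < i → dprod t m (f i) = s ^ (m * (m + 1)) • f i := by
    intro m
    induction m with
    | zero => intro _ i _; simp [dprod]
    | succ m ih =>
      intro hm i hi
      rw [dprod, Module.End.mul_apply, hc (m + 1) hm i hi, map_smul, ih (by omega) i (by omega),
        smul_smul]
      congr 1; ring
  have hc1 : ∀ m, m ≤ k + 1 → cprod t m (f 1) = f (m + 1) - f m := by
    intro m
    induction m with
    | zero => intro _; simp [cprod, h0]
    | succ m ih =>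
      intro hm
      rw [cprod, Module.End.mul_apply, ih (by omega), map_sub, hdiag (m + 1) (by omega) hm,
        hoff m (m + 1) (by omega) hm (by omega), Nat.add_sub_cancel]
      abel
  have hd1 : ∀ m, m + 1 ≤ k + 1 →
      dprod t (m + 1) (f (m + 1)) = s ^ (m * (m + 3)) • (f (m + 2) - f 1) := by
    intro m
    induction m with
    | zero =>
      intro hm
      simp [dprod, cprod, hdiag 1 le_rfl hm, h0]
    | succ m ih =>
      intro hm
      have e1 : cprod t (m + 1 + 1) (f (m + 1 + 1)) =
          s ^ (2 * (m + 1)) • (f (m + 3) + s ^ 2 • f (m + 1) - f (m + 2)) := by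
        rw [cprod, Module.End.mul_apply, hc (m + 1) (by omega) _ (by omega), map_smul,
          hdiag (m + 1 + 1) (by omega) hm]
        rfl
      rw [dprod, Module.End.mul_apply, e1, map_smul, map_sub, map_add, map_smul,
        ih (by omega), hd (m + 1) (by omega) _ (by omega), hd (m + 1) (by omega) _ (by omega)]
      match_scalars <;> ring
  have r1 : dprod t (k + 1) (f 1) = -(s ^ (k * (k + 1))) • f (k + 1) := by
    rw [dprod, Module.End.mul_apply, hc1 (k + 1) le_rfl, hn, zero_sub, map_neg,
      hd k (by omega) _ (by omega), neg_smul]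
  have r2 := hd1 k le_rfl
  rw [hn] at r2
  rw [map_add, map_smul, r1, r2]
  match_scalars <;> ring

namespace CompleteFlag

variable {F : Type} [Field F] {n : ℕ}

open scoped Classical in
/-- Indicator function of `x ∈ U_i`. -/
noncomputable def phi (x : Fin (n + 1) → F) (i : ℕ) (C : CompleteFlag F n) : ℝ :=
  if x ∈ C.sub i then 1 else 0

theorem relOp_same_of_const [Fintype F] [Fintype (CompleteFlag F n)] {j : ℕ} (h1 : 1 ≤ j)
    (h2 : j ≤ n) {f : CompleteFlag F n → ℝ} (hf : ∀ C D, Same j C D → f C = f D) :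
    relOp (Same j) f = ((Fintype.card F : ℝ) + 1) • f := by
  classical
  funext C
  rw [relOp_apply, ← Finset.sum_filter, Finset.sum_congr rfl (g := fun _ => f C)]
  · rw [Finset.sum_const, card_panel_s10 C j h1 h2]
    simp
  · intro D hD
    exact (hf C D (by simpa using hD)).symm

theorem relOp_same_phi [Fintype F] [Fintype (CompleteFlag F n)] {j : ℕ} (h1 : 1 ≤ j)
    (h2 : j ≤ n) (x : Fin (n + 1) → F) :
    relOp (Same j) (phi x j) = phi x (j + 1) + (Fintype.card F : ℝ) • phi x (j - 1) := by
  classical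
  funext C
  rw [relOp_apply, ← Finset.sum_filter, Pi.add_apply, Pi.smul_apply, smul_eq_mul]
  by_cases ha : x ∈ C.sub (j - 1)
  · have hb : x ∈ C.sub (j + 1) := C.sub_mono (by omega) ha
    rw [Finset.sum_congr rfl (g := fun _ => (1 : ℝ))]
    · rw [Finset.sum_const, card_panel_s10 C j h1 h2]
      simp [phi, ha, hb]; ring
    · intro D hD
      have hD : Same j C D := by simpa using hD
      rw [hD (j - 1) (by omega)] at ha
      have : x ∈ D.sub j := D.sub_mono (by omega) ha
      simp [phi, this]
  · by_cases hb : x ∈ C.sub (j + 1)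
    · have hlt : C.sub (j - 1) < C.sub (j - 1) ⊔ Submodule.span F {x} := by
        rw [left_lt_sup, Submodule.span_singleton_le_iff_mem]; exact ha
      have hfin : finrank F ↥(C.sub (j - 1) ⊔ Submodule.span F {x}) = j := by
        have e1 := Submodule.finrank_lt_finrank_of_lt hlt
        have e2 := Submodule.finrank_add_le_finrank_add_finrank (C.sub (j - 1))
          (Submodule.span F {x})
        have e3 : finrank F (Submodule.span F {x}) = 1 := finrank_span_singleton (by
          rintro rfl; exact ha (Submodule.zero_mem _))
        rw [C.finrank_sub (by omega)] at e1 e2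
        omega
      obtain ⟨D₀, hD1, hD2⟩ := C.exists_upd j h1 h2 _ hfin le_sup_left
        (sup_le (C.sub_mono (by omega)) (by rwa [Submodule.span_singleton_le_iff_mem]))
      have hx0 : x ∈ D₀.sub j := by
        rw [hD1, ← Submodule.span_singleton_le_iff_mem]; exact le_sup_right
      rw [Finset.sum_eq_single_of_mem D₀ (Finset.mem_filter.mpr ⟨Finset.mem_univ _, hD2⟩)]
      · simp [phi, ha, hb, hx0]
      · intro D hD hne
        have hD : Same j C D := by simpa using hD
        have : x ∉ D.sub j := by
          intro hx
          apply hne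
          refine (hD.symm.trans hD2).eq ?_
          rw [hD1]
          symm
          apply D.eq_of_le_sub (by omega) hfin
          apply sup_le
          · rw [hD (j - 1) (by omega)]; exact D.sub_mono (by omega)
          · rwa [Submodule.span_singleton_le_iff_mem]
        simp [phi, this]
    · rw [Finset.sum_eq_zero]
      · simp [phi, ha, hb]
      · intro D hD
        have hD : Same j C D := by simpa using hD
        have : x ∉ D.sub j := by
          intro hx
          apply hb
          rw [hD (j + 1) (by omega)]
          exact D.sub_mono (by omega) hx
        simp [phi, this]

theorem relOp_adja [Fintype (CompleteFlag F n)] (j : ℕ) (f : CompleteFlag F n → ℝ) :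
    relOp (Adja j) f = relOp (Same j) f - f := by
  rw [relOp_same]; simp

theorem dprod_eq_opp [Fintype (CompleteFlag F n)] :
    dprod (fun i => relOp (Adja (F := F) (n := n) i)) n = relOp Opposite := by
  rw [relOp_Arel_eq le_rfl]
  congr 1
  funext C D
  exact propext (Arel_n C D)

theorem exists_eigenvector [Fintype F] [Fintype (CompleteFlag F n)] (hn : 1 ≤ n) :
    ∃ v : CompleteFlag F n → ℝ, v ≠ 0 ∧
      relOp Opposite v = (-(Real.sqrt (Fintype.card F) ^ (n ^ 2 - 1))) • v := by
  obtain ⟨C₀⟩ := exists_flag (F := F) (n := n)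
  obtain ⟨k, rfl⟩ : ∃ k, n = k + 1 := ⟨n - 1, by omega⟩
  set s := Real.sqrt (Fintype.card F) with hs
  have hcard : (0 : ℝ) < Fintype.card F := by exact_mod_cast Fintype.card_pos
  have hspos : 0 < s := Real.sqrt_pos.mpr hcard
  have hs2 : s ^ 2 = Fintype.card F := Real.sq_sqrt hcard.le
  obtain ⟨x, hx, hx0⟩ : ∃ x ∈ C₀.sub 1, x ≠ 0 := by
    apply Submodule.exists_mem_ne_zero_of_ne_bot
    intro h
    have := C₀.finrank_sub (i := 1) (by omega)
    rw [h, finrank_bot] at this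
    omega
  obtain ⟨y, hy⟩ : ∃ y, y ∉ C₀.sub 1 := by
    by_contra hcon
    push Not at hcon
    have h : C₀.sub 1 = ⊤ := by ext y; simp [hcon y]
    have := C₀.finrank_sub (i := 1) (by omega)
    rw [h, finrank_top, finrank_fin_fun] at this
    omega
  have hy0 : y ≠ 0 := by rintro rfl; exact hy (Submodule.zero_mem _)
  let f : ℕ → CompleteFlag F (k + 1) → ℝ := fun i => phi x i - phi y i
  have key := reflection_eigen k s hspos.ne'
    (fun i => relOp (Adja (F := F) (n := k + 1) i)) f (by
      intro i j h1 h2 hij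
      have : relOp (Same j) (f i) = ((Fintype.card F : ℝ) + 1) • f i := by
        apply relOp_same_of_const h1 h2
        intro C D h
        simp only [f, phi, Pi.sub_apply]
        rw [h i hij]
      rw [relOp_adja, this, hs2]
      module) (by
      intro j h1 h2
      rw [relOp_adja, hs2]
      simp only [f]
      rw [map_sub, relOp_same_phi h1 h2, relOp_same_phi h1 h2]
      module) (by
      funext C
      simp [f, phi, sub_zero, hx0, hy0]) (by
      funext C
      simp [f, phi, sub_gt C (show k + 1 < k + 2 by omega)])
  rw [dprod_eq_opp] at key
  refine ⟨s ^ k • f 1 + f (k + 1), ?_, ?_⟩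
  · intro h
    have h := congrFun h C₀
    have hx' : x ∈ C₀.sub (k + 1) := C₀.sub_mono (by omega) hx
    simp only [f, phi, Pi.add_apply, Pi.smul_apply, Pi.sub_apply, hx, hy, hx', if_true, if_false,
      smul_eq_mul, Pi.zero_apply, _root_.sub_zero, mul_one] at h
    have h1 : 0 < s ^ k := by positivity
    split_ifs at h <;> linarith
  · have e : (k + 1) ^ 2 - 1 = k ^ 2 + 2 * k := by
      have : (k + 1) ^ 2 = k ^ 2 + 2 * k + 1 := by ring
      omega
    rw [e]
    exact key

/-! ### The lower bound -/

theorem sum_relOp_adja [Fintype F] [Fintype (CompleteFlag F n)] {i : ℕ} (h1 : 1 ≤ i) (h2 : i ≤ n)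
    (f : CompleteFlag F n → ℝ) :
    ∑ C, relOp (Adja i) f C = (Fintype.card F : ℝ) * ∑ C, f C := by
  classical
  have : ∑ C, relOp (Same i) f C = ((Fintype.card F : ℝ) + 1) * ∑ C, f C := by
    simp only [relOp_apply]
    rw [Finset.sum_comm, Finset.mul_sum]
    refine Finset.sum_congr rfl fun D _ => ?_
    rw [← Finset.sum_filter, Finset.sum_const, nsmul_eq_mul]
    have e : Finset.univ.filter (fun C : CompleteFlag F n => Same i C D)
        = Finset.univ.filter (fun C : CompleteFlag F n => Same i D C) := by
      ext C; simp only [Finset.mem_filter, Finset.mem_univ, true_and]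
      exact ⟨Same.symm, Same.symm⟩
    rw [e, card_panel_s10 D i h1 h2]
    push_cast; ring
  rw [relOp_adja]
  simp only [Pi.sub_apply, Finset.sum_sub_distrib, this]
  ring

theorem sum_opp [Fintype F] [Fintype (CompleteFlag F n)] :
    ∃ c : ℝ, 0 ≤ c ∧ ∀ f : CompleteFlag F n → ℝ, ∑ C, relOp Opposite f C = c * ∑ C, f C := by
  have hc : ∀ m, m ≤ n → ∃ c : ℝ, 0 ≤ c ∧ ∀ f : CompleteFlag F n → ℝ,
      ∑ C, cprod (fun i => relOp (Adja (F := F) (n := n) i)) m f C = c * ∑ C, f C := by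
    intro m
    induction m with
    | zero => intro _; exact ⟨1, by norm_num, fun f => by simp [cprod]⟩
    | succ m ih =>
      intro hm
      obtain ⟨c, h0, h⟩ := ih (by omega)
      refine ⟨Fintype.card F * c, by positivity, fun f => ?_⟩
      rw [cprod, Module.End.mul_apply, sum_relOp_adja (by omega) hm, h, mul_assoc]
  have hd : ∀ m, m ≤ n → ∃ c : ℝ, 0 ≤ c ∧ ∀ f : CompleteFlag F n → ℝ,
      ∑ C, dprod (fun i => relOp (Adja (F := F) (n := n) i)) m f C = c * ∑ C, f C := by
    intro m
    induction m with
    | zero => intro _; exact ⟨1, by norm_num, fun f => by simp [dprod]⟩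
    | succ m ih =>
      intro hm
      obtain ⟨c, h0, h⟩ := ih (by omega)
      obtain ⟨c', h0', h'⟩ := hc (m + 1) hm
      refine ⟨c * c', by positivity, fun f => ?_⟩
      rw [dprod, Module.End.mul_apply, h, h', mul_assoc]
  have := hd n le_rfl
  rwa [dprod_eq_opp] at this

theorem relOp_adja_zero [Fintype (CompleteFlag F n)] {i : ℕ} (h : ¬ (1 ≤ i ∧ i ≤ n)) :
    relOp (Adja (F := F) (n := n) i) = 0 := by
  classical
  refine LinearMap.ext fun f => funext fun C => ?_
  rw [relOp_apply]
  apply Finset.sum_eq_zero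
  intro D _
  rw [if_neg]
  rintro ⟨hne, hs⟩
  exact hne (ext_sub fun j a b => hs j (by rintro rfl; exact h ⟨a, b⟩))

theorem opp_comm_adja [Fintype F] [Fintype (CompleteFlag F n)] {i : ℕ} (h1 : 1 ≤ i) (h2 : i ≤ n) :
    relOp (Opposite (F := F) (n := n)) * relOp (Adja i)
      = relOp (Adja (n + 1 - i)) * relOp Opposite := by
  have := opp_comm (F := F) h1 h2
  rw [relOp_same, relOp_same, mul_add, add_mul, mul_one, one_mul] at this
  exact add_right_cancel this

theorem coe_dprod {V : Type} [AddCommGroup V] [Module ℝ V] (E : Submodule ℝ V)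
    (T : ℕ → Module.End ℝ V) (t : ℕ → Module.End ℝ E) (h : ∀ i x, ((t i x : E) : V) = T i x)
    (m : ℕ) (x : E) : ((dprod t m x : E) : V) = dprod T m x := by
  have hc : ∀ m (x : E), ((cprod t m x : E) : V) = cprod T m x := by
    intro m
    induction m with
    | zero => intro x; simp [cprod]
    | succ m ih => intro x; rw [cprod, cprod, Module.End.mul_apply, Module.End.mul_apply, h, ih]
  induction m generalizing x with
  | zero => simp [dprod]
  | succ m ih => rw [dprod, dprod, Module.End.mul_apply, Module.End.mul_apply, ih, hc]

theorem eigenvalue_bound [Fintype F] [Fintype (CompleteFlag F n)] (hn : 1 ≤ n) (lam : ℝ)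
    (hlam : lam < 0) (v : CompleteFlag F n → ℝ) (hv : v ≠ 0)
    (hev : relOp Opposite v = lam • v) : lam ^ 2 ≤ (Fintype.card F : ℝ) ^ (n ^ 2 - 1) := by
  have hq1 : (1 : ℝ) ≤ Fintype.card F := by exact_mod_cast Fintype.card_pos
  set q : ℝ := (Fintype.card F : ℝ) with hq
  set A : Module.End ℝ (CompleteFlag F n → ℝ) := relOp Opposite with hA
  let T : ℕ → Module.End ℝ (CompleteFlag F n → ℝ) := fun i => relOp (Adja i)
  have hAT : dprod T n = A := dprod_eq_opp
  let E : Submodule ℝ (CompleteFlag F n → ℝ) :=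
    { carrier := {f | A (A f) = lam ^ 2 • f ∧ ∑ C, f C = 0}
      add_mem' := by
        rintro f g ⟨a, b⟩ ⟨a', b'⟩
        refine ⟨by rw [map_add, map_add, a, a', smul_add], ?_⟩
        simp only [Pi.add_apply, Finset.sum_add_distrib, b, b', add_zero]
      zero_mem' := by constructor <;> simp
      smul_mem' := by
        rintro c f ⟨a, b⟩
        refine ⟨by rw [map_smul, map_smul, a, smul_comm], ?_⟩
        simp only [Pi.smul_apply, smul_eq_mul, ← Finset.mul_sum, b, mul_zero] }
  have hE : ∀ f, f ∈ E ↔ (A (A f) = lam ^ 2 • f ∧ ∑ C, f C = 0) := fun f => Iff.rfl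
  have hcom : ∀ i, 1 ≤ i → i ≤ n → ∀ f, A (T i f) = T (n + 1 - i) (A f) := by
    intro i h1 h2 f
    exact LinearMap.congr_fun (opp_comm_adja (F := F) h1 h2) f
  have hstab : ∀ i, ∀ f ∈ E, T i f ∈ E := by
    intro i f hf
    by_cases h : 1 ≤ i ∧ i ≤ n
    · rw [hE] at hf ⊢
      constructor
      · have e : n + 1 - (n + 1 - i) = i := by omega
        rw [hcom i h.1 h.2, hcom _ (by omega) (by omega), e, hf.1, map_smul]
      · rw [sum_relOp_adja h.1 h.2, hf.2, mul_zero]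
    · have : T i = 0 := relOp_adja_zero h
      rw [this]; exact E.zero_mem
  let t : ℕ → Module.End ℝ E := fun i => (T i).restrict (hstab i)
  have ht : ∀ i (x : E), ((t i x : E) : CompleteFlag F n → ℝ) = T i x := fun i x => rfl
  have hdp : ∀ x : E, ((dprod t n x : E) : CompleteFlag F n → ℝ) = A x := by
    intro x; rw [coe_dprod E T t ht, hAT]
  have hvE : v ∈ E := by
    rw [hE]
    constructor
    · rw [hev, map_smul, hev, smul_smul, sq]
    · obtain ⟨c, hc0, hc⟩ := sum_opp (F := F) (n := n)
      have h := hc v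
      rw [← hA, hev] at h
      simp only [Pi.smul_apply, smul_eq_mul, ← Finset.mul_sum] at h
      have : (c - lam) * ∑ C, v C = 0 := by rw [sub_mul, h]; ring
      rcases mul_eq_zero.mp this with h | h
      · linarith
      · exact h
  have : Nontrivial E := ⟨⟨⟨v, hvE⟩, 0, fun h => hv (congrArg Subtype.val h)⟩⟩
  refine hecke_bound n hn q hq1 t ?_ ?_ lam hlam.ne ?_ ?_
  · intro i h1 h2
    have h := relOp_same_mul (F := F) i h1 h2
    rw [relOp_same] at h
    refine LinearMap.ext fun x => Subtype.ext ?_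
    have := LinearMap.congr_fun h (x : CompleteFlag F n → ℝ)
    push_cast at this
    exact this
  · intro i h1 h2
    refine LinearMap.ext fun x => Subtype.ext ?_
    rw [Module.End.mul_apply, Module.End.mul_apply, hdp, ht, ht, hdp]
    exact hcom i h1 h2 x
  · refine LinearMap.ext fun x => Subtype.ext ?_
    rw [Module.End.mul_apply, hdp, hdp]
    exact x.2.1
  · intro x hx
    have hinv : ∀ i, 1 ≤ i → i ≤ n → ∀ C D, Same i C D →
        (x : CompleteFlag F n → ℝ) C = (x : CompleteFlag F n → ℝ) D := by
      intro i h1 h2 C D hCD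
      have h : T i x = q • (x : CompleteFlag F n → ℝ) := by
        rw [← ht, hx i h1 h2]; rfl
      have h3 : relOp (Same i) (x : CompleteFlag F n → ℝ)
          = (q + 1) • (x : CompleteFlag F n → ℝ) := by
        rw [relOp_same, LinearMap.add_apply]
        change T i x + _ = _
        rw [h]; simp [add_smul]
      have h4 : relOp (Same i) (x : CompleteFlag F n → ℝ) C
          = relOp (Same i) (x : CompleteFlag F n → ℝ) D := by
        classical
        rw [relOp_apply, relOp_apply]
        refine Finset.sum_congr rfl fun G _ => ?_
        have : Same i C G ↔ Same i D G := ⟨fun h => hCD.symm.trans h, fun h => hCD.trans h⟩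
        simp only [this]
      rw [h3, Pi.smul_apply, Pi.smul_apply, smul_eq_mul, smul_eq_mul] at h4
      exact mul_left_cancel₀ (by positivity) h4
    have hconst := constant_of_invariant hinv
    apply Subtype.ext
    funext C
    have hsum := x.2.2
    rw [Finset.sum_congr rfl (fun D _ => hconst D C), Finset.sum_const, nsmul_eq_mul] at hsum
    rcases mul_eq_zero.mp hsum with h | h
    · haveI : Nonempty (CompleteFlag F n) := ⟨C⟩
      exact absurd h (by exact_mod_cast Finset.card_ne_zero_of_mem (Finset.mem_univ C))
    · exact h

end CompleteFlag

end OppositionProof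


open scoped Classical in
/-- The smallest eigenvalue of the adjacency matrix `A` of the opposition graph on
complete flags of `F_q^{n+1}` equals `−(√q)^{n²−1} = −q^{(n²−1)/2}`: every real
eigenvalue of `A` is at least `−(√q)^{n²−1}`, and `−(√q)^{n²−1}` is an eigenvalue. -/
theorem opposition_graph_smallest_eigenvalue (n : ℕ) (hn : 1 ≤ n)
    (F : Type) [Field F] [Fintype F] (q : ℕ) (hq : q = Fintype.card F)
    [Fintype (CompleteFlag F n)]
    (A : Matrix (CompleteFlag F n) (CompleteFlag F n) ℝ)
    (hA : A = fun F1 F2 => if F1.Opposite F2 then (1 : ℝ) else 0) :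
    (∀ lam : ℝ, (∃ v : CompleteFlag F n → ℝ, v ≠ 0 ∧ A.mulVec v = lam • v) →
      -(Real.sqrt q ^ (n ^ 2 - 1)) ≤ lam) ∧
    (∃ v : CompleteFlag F n → ℝ, v ≠ 0 ∧
      A.mulVec v = (-(Real.sqrt q ^ (n ^ 2 - 1))) • v) := by
  subst hq
  have hmul : ∀ v : CompleteFlag F n → ℝ, A.mulVec v = relOp CompleteFlag.Opposite v := by
    intro v
    funext C
    rw [relOp_apply, hA]
    simp only [Matrix.mulVec, dotProduct, ite_mul, one_mul, zero_mul]
  refine ⟨?_, ?_⟩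
  · rintro lam ⟨v, hv, hev⟩
    have hpos : 0 ≤ Real.sqrt (Fintype.card F) ^ (n ^ 2 - 1) := by positivity
    rcases le_or_gt 0 lam with h | h
    · linarith
    · rw [hmul] at hev
      have hb := CompleteFlag.eigenvalue_bound hn lam h v hv hev
      have e : (Fintype.card F : ℝ) ^ (n ^ 2 - 1)
          = (Real.sqrt (Fintype.card F) ^ (n ^ 2 - 1)) ^ 2 := by
        rw [← pow_mul, mul_comm, pow_mul, Real.sq_sqrt (Nat.cast_nonneg _)]
      rw [e] at hb
      exact (abs_le_of_sq_le_sq' hb hpos).1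
  · obtain ⟨v, hv, hev⟩ := CompleteFlag.exists_eigenvector (F := F) hn
    exact ⟨v, hv, by rw [hmul, hev]⟩
end
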